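/- For every α > 0 there exists an integer n₀ = n₀(α) such that every oriented graph G on n ≥ n₀ vertices with minimum semidegree δ⁰(G) ≥ (3/8 + α)n contains every orientation of a Hamilton cycle: for every sequence ε₁, …, εₙ ∈ {+1, −1} there is a cyclic ordering v₁, v₂, …, vₙ of all the vertices of G such that for each i (indices mod n), G contains the edge vᵢvᵢ₊₁ if εᵢ = +1 and the edge vᵢ₊₁vᵢ if εᵢ = −1. -/

import Mathlib

/-- The outdegree of a vertex `x` in the digraph with adjacency relation `G`. -/
noncomputable def outDeg {V : Type*} (G : V → V → Prop) (x : V) : ℕ :=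
  Nat.card {y : V // G x y}

/-- The indegree of a vertex `x` in the digraph with adjacency relation `G`. -/
noncomputable def inDeg {V : Type*} (G : V → V → Prop) (x : V) : ℕ :=
  Nat.card {y : V // G y x}

/-- An oriented graph: no loops and no 2-cycles. -/
def IsOriented {V : Type*} (G : V → V → Prop) : Prop :=
  ∀ x y : V, G x y → ¬ G y x

namespace OrientedHam

open Finset
open scoped Classical

/-- The edge relation read in direction `s`: forwards if `s = true`, backwards otherwise. -/
def E {V : Type*} (G : V → V → Prop) (s : Bool) (x y : V) : Prop :=
  if s = true then G x y else G y x

/-- The opposite digraph. -/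
def op {V : Type*} (G : V → V → Prop) (x y : V) : Prop := G y x

/-- The neighbourhood of `x` in direction `s`. -/
noncomputable def nb {V : Type*} [Fintype V] (G : V → V → Prop) (s : Bool) (x : V) : Finset V :=
  univ.filter (E G s x)

/-- The vertices with at least `ν n` neighbours in direction `s` inside `S`. -/
noncomputable def rn {V : Type*} [Fintype V] (G : V → V → Prop) (ν : ℝ) (s : Bool)
    (S : Finset V) : Finset V :=
  univ.filter fun v => ν * (Fintype.card V : ℝ) ≤ ((nb G s v ∩ S).card : ℝ)

/-- The expansion and degree properties on which the embedding relies. -/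
structure Expander {V : Type*} [Fintype V] (G : V → V → Prop) (ν : ℝ) : Prop where
  pos : 0 < ν
  small : ν ≤ 1 / 800
  card_pos : 0 < Fintype.card V
  deg : ∀ s x, (3 / 8 + 2 * ν) * (Fintype.card V : ℝ) ≤ ((nb G s x).card : ℝ)
  exp : ∀ s (S : Finset V), 3 / 8 * (Fintype.card V : ℝ) ≤ (S.card : ℝ) →
    min (Fintype.card V : ℝ) (S.card + ν * Fintype.card V) ≤ ((rn G ν s S).card : ℝ)

section Basic

variable {V : Type*}

lemma E_op (G : V → V → Prop) (s : Bool) (x y : V) : E (op G) s x y ↔ E G (!s) x y := by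
  cases s <;> simp [E, op]

lemma E_swap (G : V → V → Prop) (s : Bool) (x y : V) : E G (!s) x y ↔ E G s y x := by
  cases s <;> simp [E]

lemma E_true {G : V → V → Prop} {x y : V} : E G true x y ↔ G x y := by simp [E]

lemma E_false {G : V → V → Prop} {x y : V} : E G false x y ↔ G y x := by simp [E]

variable [Fintype V]

lemma mem_nb {G : V → V → Prop} {s : Bool} {x y : V} : y ∈ nb G s x ↔ E G s x y := by
  simp [nb]

lemma mem_nb_true {G : V → V → Prop} {x y : V} : y ∈ nb G true x ↔ G x y := by
  simp [nb, E]

lemma mem_nb_false {G : V → V → Prop} {x y : V} : y ∈ nb G false x ↔ G y x := by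
  simp [nb, E]

lemma mem_nb_swap {G : V → V → Prop} {s : Bool} {x y : V} :
    y ∈ nb G (!s) x ↔ x ∈ nb G s y := by
  simp [mem_nb, E_swap]

lemma nb_op (G : V → V → Prop) (s : Bool) (x : V) : nb (op G) s x = nb G (!s) x := by
  ext y; simp [mem_nb, E_op]

lemma rn_op (G : V → V → Prop) (ν : ℝ) (s : Bool) (S : Finset V) :
    rn (op G) ν s S = rn G ν (!s) S := by
  simp [rn, nb_op]

lemma mem_rn {G : V → V → Prop} {ν : ℝ} {s : Bool} {S : Finset V} {v : V} :
    v ∈ rn G ν s S ↔ ν * (Fintype.card V : ℝ) ≤ ((nb G s v ∩ S).card : ℝ) := by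
  simp [rn]

lemma Expander.op {G : V → V → Prop} {ν : ℝ} (h : Expander G ν) : Expander (op G) ν :=
  ⟨h.pos, h.small, h.card_pos, fun s x => by rw [nb_op]; exact h.deg _ _,
    fun s S hS => by rw [rn_op]; exact h.exp _ _ hS⟩

/-- The number of edges in direction `s` from `X` to `Y`. -/
noncomputable def edges (G : V → V → Prop) (s : Bool) (X Y : Finset V) : ℝ :=
  ∑ v ∈ X, ((nb G s v ∩ Y).card : ℝ)

lemma edges_comm (G : V → V → Prop) (s : Bool) (X Y : Finset V) :
    edges G s X Y = edges G (!s) Y X := by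
  have h := Finset.sum_card_bipartiteAbove_eq_sum_card_bipartiteBelow (s := X) (t := Y) (E G s)
  have h1 : ∀ v, Finset.bipartiteAbove (E G s) Y v = nb G s v ∩ Y := by
    intro v; ext w; simp [Finset.bipartiteAbove, mem_nb, and_comm]
  have h2 : ∀ v, Finset.bipartiteBelow (E G s) X v = nb G (!s) v ∩ X := by
    intro v; ext w; simp [Finset.bipartiteBelow, mem_nb, E_swap, and_comm]
  simp only [h1, h2] at h
  unfold edges
  exact_mod_cast h

lemma edges_nonneg (G : V → V → Prop) (s : Bool) (X Y : Finset V) : 0 ≤ edges G s X Y :=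
  Finset.sum_nonneg fun _ _ => Nat.cast_nonneg _

lemma edges_union_left (G : V → V → Prop) (s : Bool) {X X' : Finset V} (Y : Finset V)
    (h : Disjoint X X') : edges G s (X ∪ X') Y = edges G s X Y + edges G s X' Y :=
  Finset.sum_union h

lemma edges_union_right (G : V → V → Prop) (s : Bool) (Y : Finset V) {X X' : Finset V}
    (h : Disjoint X X') : edges G s Y (X ∪ X') = edges G s Y X + edges G s Y X' := by
  rw [edges_comm, edges_union_left _ _ _ h, ← edges_comm, ← edges_comm]

lemma edges_add_le {G : V → V → Prop} (hG : IsOriented G) (s : Bool) (X Y : Finset V) :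
    edges G s X Y + edges G s Y X ≤ X.card * Y.card := by
  rw [edges_comm G s Y X]
  unfold edges
  rw [← Finset.sum_add_distrib, ← nsmul_eq_mul]
  refine Finset.sum_le_card_nsmul _ _ _ fun v _ => ?_
  have hd : Disjoint (nb G s v ∩ Y) (nb G (!s) v ∩ Y) := by
    rw [Finset.disjoint_left]
    intro w hw hw'
    simp only [mem_inter, mem_nb] at hw hw'
    cases s <;> simp [E] at hw hw' <;> exact hG _ _ hw.1 hw'.1
  have := Finset.card_union_of_disjoint hd
  have h2 : (nb G s v ∩ Y ∪ nb G (!s) v ∩ Y).card ≤ Y.card :=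
    Finset.card_le_card (Finset.union_subset Finset.inter_subset_right Finset.inter_subset_right)
  rw [this] at h2
  exact_mod_cast h2

lemma le_edges_univ {G : V → V → Prop} {s : Bool} {d : ℝ}
    (hd : ∀ x, d ≤ ((nb G s x).card : ℝ)) (X : Finset V) :
    d * X.card ≤ edges G s X univ := by
  unfold edges
  rw [mul_comm, ← nsmul_eq_mul]
  refine Finset.card_nsmul_le_sum _ _ _ fun v _ => ?_
  simpa using hd v

lemma edges_compl_rn_le (G : V → V → Prop) {ν : ℝ} (hν : 0 ≤ ν) (s : Bool) (S : Finset V) :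
    edges G s (rn G ν s S)ᶜ S ≤ ν * (Fintype.card V) ^ 2 := by
  have h1 : edges G s (rn G ν s S)ᶜ S ≤ (rn G ν s S)ᶜ.card • (ν * (Fintype.card V : ℝ)) := by
    refine Finset.sum_le_card_nsmul _ _ _ fun v hv => ?_
    have : ¬ v ∈ rn G ν s S := by simpa using hv
    rw [mem_rn, not_le] at this
    exact this.le
  rw [nsmul_eq_mul] at h1
  have h2 : ((rn G ν s S)ᶜ.card : ℝ) ≤ Fintype.card V := by
    exact_mod_cast Finset.card_le_univ _
  have h3 : 0 ≤ ν * (Fintype.card V : ℝ) := by positivity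
  nlinarith

end Basic
section Expansion

lemma expansion_arith {α ν n a b c d : ℝ} (hα : 0 < α) (hα1 : α ≤ 1 / 8) (hν : 0 < ν) (hνα : 100 * ν ≤ α)
    (hn : 0 < n) (hb : 0 ≤ b)
    (hsum : a + b + c + d = n)
    (hA : (3 / 8 + α) * n * a ≤ a * a / 2 + c * a + ν * n ^ 2)
    (hD : (3 / 8 + α) * n * d ≤ d * d / 2 + d * c + ν * n ^ 2)
    (hB : (3 / 8 + α) * n * b + (3 / 8 + α) * n * b ≤ b * (c + d + a) + 2 * (ν * n ^ 2))
    (hS : 3 / 8 * n ≤ a + b) (hS' : a + b ≤ 5 / 8 * n) : b + ν * n ≤ c := by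
  by_contra hcon
  push Not at hcon
  have hνn : 0 < ν * n := by positivity
  have hb4 : b ≤ (1 / 4 - α) * n ∨ b ≤ n / 8 := by
    by_contra! h
    obtain ⟨h1, h2⟩ := h
    have e : c + d + a = n - b := by linarith
    rw [e] at hB
    have : b * (b - (1 / 4 - 2 * α) * n) ≤ 2 * (ν * n ^ 2) := by nlinarith
    have h3 : α * n ≤ b - (1 / 4 - 2 * α) * n := by nlinarith
    have h4 : n / 8 * (α * n) ≤ b * (b - (1 / 4 - 2 * α) * n) := by
      apply mul_le_mul h2.le h3 (by positivity) hb
    nlinarith [mul_pos hn hn]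
  have hα8 : b ≤ n / 4 := by
    rcases hb4 with h | h
    · nlinarith
    · linarith
  have ha8 : n / 8 ≤ a := by linarith
  have hνn' : ν * n ≤ n / 400 := by nlinarith
  have hd8 : n / 9 ≤ d := by linarith
  have hA' : (3 / 8 + α - 9 * ν) * n ≤ a / 2 + c := by
    by_contra! h
    have : a * (a / 2 + c) < a * ((3 / 8 + α - 9 * ν) * n) :=
      mul_lt_mul_of_pos_left h (by linarith)
    nlinarith [mul_le_mul_of_nonneg_right ha8 hνn.le]
  have hD' : (3 / 8 + α - 9 * ν) * n ≤ d / 2 + c := by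
    by_contra! h
    have : d * (d / 2 + c) < d * ((3 / 8 + α - 9 * ν) * n) :=
      mul_lt_mul_of_pos_left h (by linarith)
    nlinarith [mul_le_mul_of_nonneg_right hd8 hνn.le]
  have hαn : 0 < α * n := by positivity
  have hναn : 100 * (ν * n) ≤ α * n := by nlinarith
  rcases hb4 with h | h
  · nlinarith
  · nlinarith

variable {V : Type*} [Fintype V]

lemma expansion_true {G : V → V → Prop} {α ν : ℝ} (hG : IsOriented G)
    (hdeg : ∀ s x, (3 / 8 + α) * (Fintype.card V : ℝ) ≤ ((nb G s x).card : ℝ))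
    (hα : 0 < α) (hα1 : α ≤ 1 / 8) (hν : 0 < ν) (hνα : 100 * ν ≤ α) (hn : 0 < Fintype.card V) (S : Finset V)
    (hS : 3 / 8 * (Fintype.card V : ℝ) ≤ (S.card : ℝ)) (s : Bool) :
    min (Fintype.card V : ℝ) (S.card + ν * Fintype.card V) ≤ ((rn G ν s S).card : ℝ) := by
  have hn' : (0 : ℝ) < Fintype.card V := by exact_mod_cast hn
  rcases le_or_gt (S.card : ℝ) (5 / 8 * (Fintype.card V : ℝ)) with hS' | hS'
  · refine (min_le_right _ _).trans ?_
    set T := rn G ν s S with hT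
    have hST := Finset.card_sdiff_add_card_inter S T
    have hTS := Finset.card_sdiff_add_card_inter T S
    have hcap : (T ∩ S).card = (S ∩ T).card := by rw [inter_comm]
    have hU := Finset.card_compl_add_card (S ∪ T)
    have hU2 : (S ∪ T).card = (S \ T).card + T.card := by
      rw [← Finset.card_union_of_disjoint Finset.sdiff_disjoint, Finset.sdiff_union_self_eq_union]
    set A := S ∩ T with hA
    set B := S \ T with hB
    set C := T \ S with hC
    set D := (S ∪ T)ᶜ with hD
    have dAB : Disjoint A B := by rw [disjoint_left]; intro x; simp [hA, hB]; tauto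
    have dAC : Disjoint A C := by rw [disjoint_left]; intro x; simp [hA, hC]; tauto
    have dAD : Disjoint A D := by rw [disjoint_left]; intro x; simp [hA, hD]; tauto
    have dBC : Disjoint B C := by rw [disjoint_left]; intro x; simp [hC, hB]; tauto
    have dBD : Disjoint B D := by rw [disjoint_left]; intro x; simp [hD, hB]; tauto
    have dCD : Disjoint C D := by rw [disjoint_left]; intro x; simp [hC, hD]; tauto
    have huniv : (univ : Finset V) = (A ∪ B) ∪ (C ∪ D) := by
      ext x; simp [hA, hB, hC, hD]; tauto
    have hTc : Tᶜ = B ∪ D := by ext x; simp [hB, hD]; tauto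
    have hSe : S = A ∪ B := by ext x; simp [hA, hB]; tauto
    have hlow : edges G s Tᶜ S ≤ ν * (Fintype.card V) ^ 2 := edges_compl_rn_le G hν.le s S
    have d4 : Disjoint (A ∪ B) (C ∪ D) := by
      simp only [disjoint_union_left, disjoint_union_right]; tauto
    rw [hTc, hSe, edges_union_left _ _ _ dBD, edges_union_right _ _ _ dAB,
      edges_union_right _ _ _ dAB] at hlow
    have out : ∀ X, edges G s X univ = edges G s X A + edges G s X B + (edges G s X C
        + edges G s X D) := by
      intro X
      rw [huniv, edges_union_right _ _ _ d4, edges_union_right _ _ _ dAB,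
        edges_union_right _ _ _ dCD]
    have hin : ∀ X, edges G (!s) X univ = edges G s A X + edges G s B X + (edges G s C X
        + edges G s D X) := by
      intro X
      rw [← edges_comm, huniv, edges_union_left _ _ _ d4, edges_union_left _ _ _ dAB,
        edges_union_left _ _ _ dCD]
    have h1 := le_edges_univ (hdeg (!s)) A
    have h2 := le_edges_univ (hdeg s) D
    have h3 := le_edges_univ (hdeg s) B
    have h4 := le_edges_univ (hdeg (!s)) B
    rw [hin] at h1 h4
    rw [out] at h2 h3
    have nn := edges_nonneg G s
    have tot := edges_add_le hG s
    have key := expansion_arith (a := A.card) (b := B.card) (c := C.card) (d := D.card)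
      hα hα1 hν hνα hn' (Nat.cast_nonneg _)
      (by have : A.card + B.card + C.card + D.card = Fintype.card V := by omega
          exact_mod_cast this)
      (by linarith [tot A A, tot C A, nn A C, nn B A, nn D A, nn B B, nn D B])
      (by linarith [tot D D, tot D C, nn C D, nn B A, nn D A, nn B B, nn D B])
      (by have e1 := tot B C
          have e2 := tot B D
          have e3 := tot A B
          linarith [nn B A, nn D A, nn B B, nn D B])
      (by have : A.card + B.card = S.card := by omega
          have h : (A.card : ℝ) + B.card = S.card := by exact_mod_cast this
          linarith)
      (by have : A.card + B.card = S.card := by omega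
          have h : (A.card : ℝ) + B.card = S.card := by exact_mod_cast this
          linarith)
    have e1 : (A.card : ℝ) + B.card = S.card := by
      have : A.card + B.card = S.card := by omega
      exact_mod_cast this
    have e2 : (A.card : ℝ) + C.card = T.card := by
      have : A.card + C.card = T.card := by omega
      exact_mod_cast this
    linarith
  · refine (min_le_left _ _).trans ?_
    have : rn G ν s S = univ := by
      ext v
      simp only [mem_rn, mem_univ, iff_true]
      have h1 := Finset.card_inter_add_card_union (nb G s v) S
      have h2 : (nb G s v ∪ S).card ≤ Fintype.card V := Finset.card_le_univ _
      have h3 : (nb G s v).card + S.card ≤ (nb G s v ∩ S).card + Fintype.card V := by omega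
      have h4 : ((nb G s v).card : ℝ) + S.card ≤ (nb G s v ∩ S).card + Fintype.card V := by
        exact_mod_cast h3
      have := hdeg s v
      nlinarith
    rw [this, Finset.card_univ]

lemma expander_of_degree {G : V → V → Prop} {α : ℝ} (hG : IsOriented G)
    (hdeg : ∀ s x, (3 / 8 + α) * (Fintype.card V : ℝ) ≤ ((nb G s x).card : ℝ))
    (hα : 0 < α) (hα' : α ≤ 1 / 8) (hn : 0 < Fintype.card V) : Expander G (α / 100) := by
  refine ⟨by positivity, by linarith, hn, fun s x => (le_trans ?_ (hdeg s x)), fun s S hS =>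
    expansion_true hG hdeg hα hα' (by positivity) (by linarith) hn S hS s⟩
  have hn' : (0 : ℝ) < Fintype.card V := by exact_mod_cast hn
  apply mul_le_mul_of_nonneg_right _ hn'.le
  linarith

end Expansion

/-- `Wk G Q a b M`: there is a walk from `a` to `b` with direction pattern `Q`, and `M` is the
multiset of the vertices visited after `a`. -/
inductive Wk {V : Type*} (G : V → V → Prop) : List Bool → V → V → Multiset V → Prop
  | nil (a : V) : Wk G [] a a 0
  | cons {s : Bool} {Q : List Bool} {a v b : V} {M : Multiset V} :
      E G s a v → Wk G Q v b M → Wk G (s :: Q) a b (v ::ₘ M)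

/-- Backwards reachable sets of `p`, in a robust sense, along a direction pattern. -/
noncomputable def T {V : Type*} [Fintype V] (G : V → V → Prop) (ν : ℝ) (p : V) :
    List Bool → Finset V
  | [] => {p}
  | [s] => nb G (!s) p
  | s :: s' :: σ => rn G ν s (T G ν p (s' :: σ))

/-- One may choose `k` elements one after the other, each time with at least `c n` options,
in such a way that the resulting multiset always satisfies `P`. -/
def Rich {V : Type*} [Fintype V] (c : ℝ) : ℕ → (Multiset V → Prop) → Prop
  | 0, P => P 0
  | k + 1, P => ∃ S : Finset V, c * (Fintype.card V : ℝ) ≤ (S.card : ℝ) ∧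
      ∀ v ∈ S, Rich c k fun M => P (v ::ₘ M)

section Walks

variable {V : Type*} {G : V → V → Prop}

lemma Wk.single {s : Bool} {a v : V} (h : E G s a v) : Wk G [s] a v {v} :=
  Wk.cons h (Wk.nil v)

lemma Wk.append {Q Q' : List Bool} {a b c : V} {M N : Multiset V} (h : Wk G Q a b M)
    (h' : Wk G Q' b c N) : Wk G (Q ++ Q') a c (M + N) := by
  induction h with
  | nil a => simpa using h'
  | cons e _ ih => simpa using Wk.cons e (ih h')

lemma Wk.congr {Q Q' : List Bool} {a b : V} {M M' : Multiset V} (h : Wk G Q a b M)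
    (hQ : Q = Q') (hM : M = M') : Wk G Q' a b M' := by
  subst hQ hM; exact h

lemma Wk.op_map {Q : List Bool} {a b : V} {M : Multiset V} (h : Wk (op G) Q a b M) :
    Wk G (Q.map (!·)) a b M := by
  induction h with
  | nil a => exact Wk.nil a
  | cons e _ ih => exact Wk.cons ((E_op _ _ _ _).1 e) ih

lemma Wk.card {Q : List Bool} {a b : V} {M : Multiset V} (h : Wk G Q a b M) :
    Multiset.card M = Q.length := by
  induction h with
  | nil a => rfl
  | cons _ _ ih => simp [ih]

lemma Wk.map {V' : Type*} {G' : V' → V' → Prop} (f : V → V')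
    (hf : ∀ x y, G x y → G' (f x) (f y)) {Q : List Bool} {a b : V} {M : Multiset V}
    (h : Wk G Q a b M) : Wk G' Q (f a) (f b) (M.map f) := by
  induction h with
  | nil a => exact Wk.nil _
  | @cons s _ _ _ _ _ e _ ih =>
    rw [Multiset.map_cons]
    refine Wk.cons ?_ ih
    cases s <;> simp only [E, if_true, Bool.false_eq_true, if_false] at e ⊢ <;> exact hf _ _ e

variable [Fintype V]

lemma Rich.mono {c : ℝ} {k : ℕ} {P P' : Multiset V → Prop} (h : Rich c k P)
    (hP : ∀ M, P M → P' M) : Rich c k P' := by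
  induction k generalizing P P' with
  | zero => exact hP _ h
  | succ k ih =>
    obtain ⟨S, hS, h⟩ := h
    exact ⟨S, hS, fun v hv => ih (h v hv) fun M => hP _⟩

lemma Rich.mono_left {c c' : ℝ} (hc : c' ≤ c) {k : ℕ} {P : Multiset V → Prop}
    (h : Rich c k P) : Rich c' k P := by
  induction k generalizing P with
  | zero => exact h
  | succ k ih =>
    obtain ⟨S, hS, h⟩ := h
    exact ⟨S, le_trans (mul_le_mul_of_nonneg_right hc (Nat.cast_nonneg _)) hS,
      fun v hv => ih (h v hv)⟩

lemma Rich.bind {c : ℝ} {k m : ℕ} {P R : Multiset V → Prop} (h : Rich c k P)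
    (hP : ∀ M, P M → Rich c m fun M' => R (M + M')) : Rich c (m + k) R := by
  induction k generalizing P R with
  | zero => simpa using hP _ h
  | succ k ih =>
    obtain ⟨S, hS, h⟩ := h
    refine ⟨S, hS, fun v hv => ih (h v hv) fun M hM => ?_⟩
    simpa using hP _ hM

lemma Rich.cons {c : ℝ} {k : ℕ} {P : Multiset V → Prop} (S : Finset V)
    (hS : c * (Fintype.card V : ℝ) ≤ (S.card : ℝ))
    (h : ∀ v ∈ S, Rich c k fun M => P (v ::ₘ M)) : Rich c (k + 1) P := ⟨S, hS, h⟩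

lemma T_card {ν : ℝ} (hG : Expander G ν) (p : V) (s : Bool) (σ : List Bool) :
    min (Fintype.card V : ℝ) ((3 / 8 + (σ.length + 1) * ν) * Fintype.card V)
      ≤ ((T G ν p (s :: σ)).card : ℝ) := by
  have hn : (0 : ℝ) < Fintype.card V := by exact_mod_cast hG.card_pos
  have hν := hG.pos
  induction σ generalizing s with
  | nil =>
    refine (min_le_right _ _).trans ?_
    simp only [T, List.length_nil, Nat.cast_zero]
    refine le_trans ?_ (hG.deg _ _)
    nlinarith [mul_pos hν hn]
  | cons s' σ ih =>
    have h1 := ih s'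
    set S := T G ν p (s' :: σ) with hS
    have h38 : 3 / 8 * (Fintype.card V : ℝ) ≤ S.card := by
      refine le_trans (le_min (by linarith) ?_) h1
      apply mul_le_mul_of_nonneg_right _ hn.le
      have : 0 ≤ ((σ.length : ℝ) + 1) * ν := by positivity
      linarith
    have h2 := hG.exp s S h38
    simp only [T, ← hS]
    refine le_trans (le_min (min_le_left _ _) ?_) h2
    rcases min_le_iff.1 h1 with h | h
    · exact (min_le_left _ _).trans (by nlinarith [mul_pos hν hn])
    · refine (min_le_right _ _).trans ?_
      push_cast [List.length_cons]
      nlinarith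

lemma T_eq_univ {ν : ℝ} (hG : Expander G ν) (p : V) {σ : List Bool}
    (h : 1 ≤ σ.length * ν) : T G ν p σ = univ := by
  have hn : (0 : ℝ) < Fintype.card V := by exact_mod_cast hG.card_pos
  cases σ with
  | nil => norm_num at h
  | cons s σ =>
    have h1 := T_card hG p s σ
    rw [min_eq_left] at h1
    · rw [← Finset.card_eq_iff_eq_univ]
      exact le_antisymm (Finset.card_le_univ _) (by exact_mod_cast h1)
    · push_cast [List.length_cons] at h
      nlinarith

lemma rich_link {ν : ℝ} (p : V) {z : V} (s : Bool) (σ : List Bool)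
    (hz : z ∈ T G ν p (s :: σ)) : Rich ν σ.length fun M => Wk G (s :: σ) z p (p ::ₘ M) := by
  induction σ generalizing s z with
  | nil =>
    simp only [T] at hz
    exact Wk.single (mem_nb.1 (mem_nb_swap.1 hz))
  | cons s' σ ih =>
    rw [T, mem_rn] at hz
    refine ⟨_, hz, fun v hv => (ih s' (mem_inter.1 hv).2).mono fun M hM => ?_⟩
    change Wk G _ z p (p ::ₘ v ::ₘ M)
    rw [Multiset.cons_swap]
    exact Wk.cons (mem_nb.1 (mem_inter.1 hv).1) hM

lemma rich_link_of_length {ν : ℝ} (hG : Expander G ν) (z p : V) {σ : List Bool}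
    (h : 1 ≤ σ.length * ν) : Rich ν (σ.length - 1) fun M => Wk G σ z p (p ::ₘ M) := by
  have h1 := T_eq_univ hG p h
  cases σ with
  | nil => norm_num at h
  | cons s σ =>
    simpa using rich_link (G := G) (ν := ν) (z := z) p s σ (by rw [h1]; exact mem_univ _)

end Walks

section Chain

lemma sum_le_card_filter {ι : Type*} (S : Finset ι) (f : ι → ℝ) {A B θ : ℝ}
    (hB : ∀ i ∈ S, f i ≤ B) (hA : A ≤ ∑ i ∈ S, f i) :
    A ≤ (S.filter fun i => θ ≤ f i).card * B + (S.filter fun i => ¬ θ ≤ f i).card * θ := by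
  refine hA.trans ?_
  rw [← Finset.sum_filter_add_sum_filter_not S (fun i => θ ≤ f i)]
  refine add_le_add ?_ ?_
  · rw [← nsmul_eq_mul]
    exact Finset.sum_le_card_nsmul _ _ _ fun i hi => hB i (mem_filter.1 hi).1
  · rw [← nsmul_eq_mul]
    exact Finset.sum_le_card_nsmul _ _ _ fun i hi => (not_le.1 (mem_filter.1 hi).2).le

variable {V : Type*} [Fintype V] {G : V → V → Prop}

lemma inter_card_real (S S' : Finset V) :
    (S.card : ℝ) + S'.card ≤ (S ∩ S').card + Fintype.card V := by
  have h1 := Finset.card_inter_add_card_union S S'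
  have h2 : (S ∪ S').card ≤ Fintype.card V := Finset.card_le_univ _
  have h3 : S.card + S'.card ≤ (S ∩ S').card + Fintype.card V := by omega
  exact_mod_cast h3

lemma card_sdiff_rn_rn_le {ν : ℝ} (hG : Expander G ν) (P : Finset V) :
    ((P \ rn G ν true (rn G ν false P)).card : ℝ) ≤ 3 * ν * Fintype.card V := by
  have hn : (0 : ℝ) < Fintype.card V := by exact_mod_cast hG.card_pos
  have hν := hG.pos
  set X := rn G ν false P with hX
  set B := P \ rn G ν true X with hB
  have h1 : edges G false Xᶜ P ≤ ν * (Fintype.card V) ^ 2 := edges_compl_rn_le G hν.le _ _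
  have h2 : edges G true P Xᶜ ≤ ν * (Fintype.card V) ^ 2 := by
    rw [edges_comm]; exact h1
  have h3 : edges G true B Xᶜ ≤ edges G true P Xᶜ :=
    Finset.sum_le_sum_of_subset_of_nonneg Finset.sdiff_subset
      fun _ _ _ => Nat.cast_nonneg _
  have h4 : B.card • (3 / 8 * (Fintype.card V : ℝ)) ≤ edges G true B Xᶜ := by
    refine Finset.card_nsmul_le_sum _ _ _ fun u hu => ?_
    have hu' : ¬ u ∈ rn G ν true X := (mem_sdiff.1 hu).2
    rw [mem_rn, not_le] at hu'
    have h5 : ((nb G true u ∩ Xᶜ).card : ℝ) + (nb G true u ∩ X).card = (nb G true u).card := by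
      have := Finset.card_sdiff_add_card_inter (nb G true u) X
      rw [Finset.sdiff_eq_inter_compl] at this
      exact_mod_cast this
    have := hG.deg true u
    nlinarith
  rw [nsmul_eq_mul] at h4
  have h6 : (B.card : ℝ) * (3 / 8) * Fintype.card V ≤ ν * Fintype.card V * Fintype.card V := by
    nlinarith
  have := le_of_mul_le_mul_right h6 hn
  nlinarith [mul_pos hν hn]

lemma card_common_rn_rn {ν : ℝ} (hG : Expander G ν) (x y : V) :
    ν * (Fintype.card V : ℝ) ≤ ((rn G ν true (rn G ν false (nb G false x)) ∩
      rn G ν true (rn G ν false (nb G false y))).card : ℝ) := by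
  have hn : (0 : ℝ) < Fintype.card V := by exact_mod_cast hG.card_pos
  have hν := hG.pos
  have hν' := hG.small
  have hνn := mul_pos hν hn
  have hνn' : ν * Fintype.card V ≤ 1 / 800 * Fintype.card V :=
    mul_le_mul_of_nonneg_right hν' hn.le
  have hB1 := card_sdiff_rn_rn_le hG (nb G false x)
  have hB2 := card_sdiff_rn_rn_le hG (nb G false y)
  set P := nb G false x with hP
  set P' := nb G false y with hP'
  set X := rn G ν false P with hX
  set Y := rn G ν false P' with hY
  set U := rn G ν true X with hU
  set U' := rn G ν true Y with hU'
  have hPc := hG.deg false x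
  have hP'c := hG.deg false y
  rw [← hP] at hPc
  rw [← hP'] at hP'c
  rcases le_or_gt (10 * (ν * Fintype.card V)) ((P ∩ P').card : ℝ) with h | h
  · have hsub : P ∩ P' ⊆ (U ∩ U') ∪ (P \ U) ∪ (P' \ U') := by
      intro v; simp only [mem_inter, mem_union, mem_sdiff]; tauto
    have h1 := Finset.card_le_card hsub
    have h2 := Finset.card_union_le ((U ∩ U') ∪ (P \ U)) (P' \ U')
    have h3 := Finset.card_union_le (U ∩ U') (P \ U)
    have h4 : (P ∩ P').card ≤ (U ∩ U').card + (P \ U).card + (P' \ U').card := by omega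
    have h5 : ((P ∩ P').card : ℝ) ≤ (U ∩ U').card + (P \ U).card + (P' \ U').card := by
      exact_mod_cast h4
    linarith
  · have hXY : X ∪ Y = univ := by
      rw [Finset.eq_univ_iff_forall]
      intro v
      by_contra hv
      simp only [mem_union, not_or] at hv
      have h1 := hv.1
      have h2 := hv.2
      rw [hX, mem_rn, not_le] at h1
      rw [hY, mem_rn, not_le] at h2
      have h3 := hG.deg false v
      have h4 := inter_card_real (nb G false v) (P ∪ P')
      have h5 := Finset.card_inter_add_card_union P P'
      have h6 : (nb G false v ∩ (P ∪ P')).card ≤ (nb G false v ∩ P).card +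
          (nb G false v ∩ P').card := by
        rw [Finset.inter_union_distrib_left]; exact Finset.card_union_le _ _
      have h5' : ((P ∩ P').card : ℝ) + (P ∪ P').card = P.card + P'.card := by exact_mod_cast h5
      have h6' : ((nb G false v ∩ (P ∪ P')).card : ℝ) ≤ (nb G false v ∩ P).card +
          (nb G false v ∩ P').card := by exact_mod_cast h6
      linarith
    have h38 : 3 / 8 * (Fintype.card V : ℝ) ≤ X.card :=
      le_trans (le_min (by linarith) (by linarith)) (hG.exp false P (by linarith))
    have h38' : 3 / 8 * (Fintype.card V : ℝ) ≤ Y.card :=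
      le_trans (le_min (by linarith) (by linarith)) (hG.exp false P' (by linarith))
    have hU1 := hG.exp true X h38
    have hU2 := hG.exp true Y h38'
    rw [← hU] at hU1
    rw [← hU'] at hU2
    have hcap := inter_card_real U U'
    have hXYc : (Fintype.card V : ℝ) ≤ X.card + Y.card := by
      have := Finset.card_union_le X Y
      rw [hXY, Finset.card_univ] at this
      exact_mod_cast this
    rcases min_le_iff.1 hU1 with a | a <;> rcases min_le_iff.1 hU2 with b | b <;> linarith

lemma sum_codegree {ν : ℝ} (hν : 0 < ν) (X Y U : Finset V)
    (hX : ∀ u ∈ U, ν * (Fintype.card V : ℝ) ≤ (nb G true u ∩ X).card)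
    (hY : ∀ u ∈ U, ν * (Fintype.card V : ℝ) ≤ (nb G true u ∩ Y).card)
    (hU : ν * (Fintype.card V : ℝ) ≤ U.card) :
    (ν * Fintype.card V) ^ 3 ≤
      ∑ c ∈ X, ∑ d ∈ Y, ((nb G false c ∩ nb G false d).card : ℝ) := by
  have hn : (0 : ℝ) ≤ Fintype.card V := Nat.cast_nonneg _
  have hνn : 0 ≤ ν * (Fintype.card V : ℝ) := by positivity
  have h1 : (ν * (Fintype.card V : ℝ)) ^ 3 ≤
      ∑ u ∈ U, ((nb G true u ∩ X).card : ℝ) * (nb G true u ∩ Y).card := by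
    have : U.card • (ν * (Fintype.card V : ℝ)) ^ 2 ≤
        ∑ u ∈ U, ((nb G true u ∩ X).card : ℝ) * (nb G true u ∩ Y).card := by
      refine Finset.card_nsmul_le_sum _ _ _ fun u hu => ?_
      rw [sq]
      exact mul_le_mul (hX u hu) (hY u hu) hνn (Nat.cast_nonneg _)
    rw [nsmul_eq_mul] at this
    refine le_trans ?_ this
    rw [pow_succ']
    exact mul_le_mul_of_nonneg_right hU (by positivity)
  refine h1.trans ?_
  have hcard : ∀ (u : V) (Z : Finset V), ((nb G true u ∩ Z).card : ℝ) =
      ∑ c ∈ Z, if G u c then (1 : ℝ) else 0 := by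
    intro u Z
    rw [Finset.sum_boole]
    congr 2
    ext c; simp [mem_nb_true, and_comm]
  simp only [hcard, Finset.sum_mul_sum]
  rw [Finset.sum_comm]
  refine Finset.sum_le_sum fun c _ => ?_
  rw [Finset.sum_comm]
  refine Finset.sum_le_sum fun d _ => ?_
  have : ∑ u ∈ U, ((if G u c then (1 : ℝ) else 0) * if G u d then (1 : ℝ) else 0) =
      ((U.filter fun u => G u c ∧ G u d).card : ℝ) := by
    rw [← Finset.sum_boole]
    refine Finset.sum_congr rfl fun u _ => ?_
    by_cases h : G u c <;> by_cases h' : G u d <;> simp [h, h']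
  rw [this]
  refine Nat.cast_le.2 (Finset.card_le_card ?_)
  intro u
  simp only [mem_filter, mem_inter, mem_nb_false]
  tauto

lemma chain {ν : ℝ} (hG : Expander G ν) (x y : V) :
    ∃ C : Finset V, ν ^ 3 / 3 * (Fintype.card V : ℝ) ≤ C.card ∧ ∀ c ∈ C,
      ν ^ 3 / 3 * (Fintype.card V : ℝ) ≤ (nb G false x ∩ nb G false c).card ∧
      ∃ D : Finset V, ν ^ 3 / 3 * (Fintype.card V : ℝ) ≤ D.card ∧ ∀ d ∈ D,
        ν ^ 3 / 3 * (Fintype.card V : ℝ) ≤ (nb G false c ∩ nb G false d).card ∧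
        ν ^ 3 / 3 * (Fintype.card V : ℝ) ≤ (nb G false d ∩ nb G false y).card := by
  have hn : (0 : ℝ) < Fintype.card V := by exact_mod_cast hG.card_pos
  have hν := hG.pos
  have hν' := hG.small
  have hν3 : ν ^ 3 / 3 * (Fintype.card V : ℝ) ≤ ν * Fintype.card V := by
    apply mul_le_mul_of_nonneg_right _ hn.le
    nlinarith [pow_pos hν 2, mul_pos hν hν]
  set n : ℝ := (Fintype.card V : ℝ) with hnd
  set X := rn G ν false (nb G false x) with hX
  set Y := rn G ν false (nb G false y) with hY
  have hsum := sum_codegree (G := G) hν X Y (rn G ν true X ∩ rn G ν true Y)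
    (fun u hu => mem_rn.1 (mem_inter.1 hu).1) (fun u hu => mem_rn.1 (mem_inter.1 hu).2)
    (card_common_rn_rn hG x y)
  rw [← hnd] at hsum
  have hcodeg : ∀ c d : V, ((nb G false c ∩ nb G false d).card : ℝ) ≤ n := fun c d => by
    rw [hnd]; exact_mod_cast Finset.card_le_univ _
  have hle : ∀ S : Finset V, (S.card : ℝ) ≤ n := fun S => by
    rw [hnd]; exact_mod_cast Finset.card_le_univ S
  have hrow : ∀ c ∈ X, (∑ d ∈ Y, ((nb G false c ∩ nb G false d).card : ℝ)) ≤ n * n := by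
    intro c _
    refine (Finset.sum_le_card_nsmul _ _ _ fun d _ => hcodeg c d).trans ?_
    rw [nsmul_eq_mul]
    exact mul_le_mul_of_nonneg_right (hle _) hn.le
  have h1 := sum_le_card_filter X _ (θ := 2 / 3 * ν ^ 3 * n ^ 2) hrow hsum
  refine ⟨X.filter fun c => 2 / 3 * ν ^ 3 * n ^ 2 ≤
      ∑ d ∈ Y, ((nb G false c ∩ nb G false d).card : ℝ), ?_, fun c hc => ⟨?_, ?_⟩⟩
  · set k : ℝ := ((X.filter fun c => 2 / 3 * ν ^ 3 * n ^ 2 ≤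
      ∑ d ∈ Y, ((nb G false c ∩ nb G false d).card : ℝ)).card : ℝ)
    have h2 := mul_le_mul_of_nonneg_right (hle (X.filter fun c => ¬ 2 / 3 * ν ^ 3 * n ^ 2 ≤
      ∑ d ∈ Y, ((nb G false c ∩ nb G false d).card : ℝ)))
      (show 0 ≤ 2 / 3 * ν ^ 3 * n ^ 2 by positivity)
    have h3 : ν ^ 3 / 3 * n * (n * n) ≤ k * (n * n) := by nlinarith
    exact le_of_mul_le_mul_right h3 (by positivity)
  · rw [inter_comm]
    exact hν3.trans (mem_rn.1 (mem_filter.1 hc).1)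
  · have h2 := sum_le_card_filter Y _ (θ := ν ^ 3 / 3 * n) (fun d _ => hcodeg c d)
      (mem_filter.1 hc).2
    refine ⟨Y.filter fun d => ν ^ 3 / 3 * n ≤ ((nb G false c ∩ nb G false d).card : ℝ), ?_,
      fun d hd => ⟨(mem_filter.1 hd).2, ?_⟩⟩
    · set k : ℝ := ((Y.filter fun d => ν ^ 3 / 3 * n ≤
        ((nb G false c ∩ nb G false d).card : ℝ)).card : ℝ)
      have h4 := mul_le_mul_of_nonneg_right (hle (Y.filter fun d => ¬ ν ^ 3 / 3 * n ≤
        ((nb G false c ∩ nb G false d).card : ℝ)))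
        (show 0 ≤ ν ^ 3 / 3 * n by positivity)
      have h3 : ν ^ 3 / 3 * n * n ≤ k * n := by nlinarith
      exact le_of_mul_le_mul_right h3 hn
    · exact hν3.trans (mem_rn.1 (mem_filter.1 hd).1)

end Chain

section Patterns

lemma split_or_monotone (M : List Bool) :
    (∃ σ τ, M = σ ++ [true, false] ++ τ) ∨
      ∃ a b, M = List.replicate a false ++ List.replicate b true := by
  induction M with
  | nil => exact Or.inr ⟨0, 0, rfl⟩
  | cons s M ih =>
    rcases ih with ⟨σ, τ, rfl⟩ | ⟨a, b, rfl⟩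
    · exact Or.inl ⟨s :: σ, τ, by simp⟩
    · cases s with
      | false => exact Or.inr ⟨a + 1, b, by simp [List.replicate_succ]⟩
      | true =>
        cases a with
        | zero => exact Or.inr ⟨0, b + 1, by simp [List.replicate_succ]⟩
        | succ a =>
          exact Or.inl ⟨[], List.replicate a false ++ List.replicate b true,
            by simp [List.replicate_succ]⟩

lemma split_or_constant (l R : ℕ) (L : List Bool) (hL : L.length = 2 * l + 2 * R) :
    (∃ σ τ, L = σ ++ [true, false] ++ τ ∧ l ≤ σ.length ∧ l ≤ τ.length) ∨
      ∃ s σ τ, L = σ ++ List.replicate R s ++ τ ∧ l ≤ σ.length ∧ l ≤ τ.length := by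
  obtain ⟨A, B, C, rfl, hA, hB, hC⟩ : ∃ A B C : List Bool, L = A ++ B ++ C ∧ A.length = l ∧
      B.length = 2 * R ∧ C.length = l := by
    refine ⟨L.take l, (L.drop l).take (2 * R), (L.drop l).drop (2 * R), ?_, ?_, ?_, ?_⟩
    · rw [List.append_assoc, List.take_append_drop, List.take_append_drop]
    all_goals simp [hL]
    all_goals omega
  rcases split_or_monotone B with ⟨σ, τ, rfl⟩ | ⟨a, b, rfl⟩
  · exact Or.inl ⟨A ++ σ, τ ++ C, by simp, by simp; omega, by simp; omega⟩
  · right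
    simp only [List.length_append, List.length_replicate] at hB
    rcases le_or_gt R a with h | h
    · refine ⟨false, A, List.replicate (a - R) false ++ List.replicate b true ++ C, ?_,
        hA.ge, by simp; omega⟩
      rw [show a = R + (a - R) by omega]
      simp [← List.replicate_append_replicate]
    · refine ⟨true, A ++ List.replicate a false, List.replicate (b - R) true ++ C, ?_,
        by simp; omega, by simp; omega⟩
      rw [show b = R + (b - R) by omega]
      simp [← List.replicate_append_replicate]

end Patterns

section Absorber

variable {V : Type*} [Fintype V] {G : V → V → Prop}

lemma Rich.cast {c : ℝ} {k k' : ℕ} {P : Multiset V → Prop} (h : Rich c k P) (e : k = k') :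
    Rich c k' P := e ▸ h

/-- `Q` can be traversed from `a` to `b` in many ways such that a specified vertex on the walk
can be switched from `y` to `x`. -/
def Absorbs (G : V → V → Prop) (c : ℝ) (Q : List Bool) (a b x y : V) : Prop :=
  Rich c (Q.length - 2) fun M => Wk G Q a b (y ::ₘ b ::ₘ M) ∧ Wk G Q a b (x ::ₘ b ::ₘ M)

lemma cube_third_le {ν : ℝ} (hG : Expander G ν) : ν ^ 3 / 3 ≤ ν := by
  nlinarith [pow_pos hG.pos 2, hG.pos, hG.small, mul_pos hG.pos hG.pos]

lemma rich_link' {ν : ℝ} (hG : Expander G ν) (z p : V) {σ : List Bool}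
    (h : 1 ≤ σ.length * ν) :
    Rich (ν ^ 3 / 3) (σ.length - 1) fun M => Wk G σ z p (p ::ₘ M) :=
  (rich_link_of_length hG z p h).mono_left (cube_third_le hG)

lemma length_pos_of_link {ν : ℝ} {σ : List Bool} (h : 1 ≤ σ.length * ν) : 1 ≤ σ.length := by
  rcases Nat.eq_zero_or_pos σ.length with h0 | h0
  · rw [h0] at h; norm_num at h
  · exact h0

lemma absorbs_split {ν : ℝ} (hG : Expander G ν) {σ₀ σ₁ σ₂ σ₃ : List Bool}
    (h0 : 1 ≤ σ₀.length * ν) (h1 : 1 ≤ σ₁.length * ν) (h2 : 1 ≤ σ₂.length * ν)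
    (h3 : 1 ≤ σ₃.length * ν) (a b x y : V) :
    Absorbs G (ν ^ 3 / 3) (σ₀ ++ [true, false] ++ σ₁ ++ [true, false] ++ σ₂ ++ [true, false]
      ++ σ₃) a b x y := by
  have p0 := length_pos_of_link h0
  have p1 := length_pos_of_link h1
  have p2 := length_pos_of_link h2
  have p3 := length_pos_of_link h3
  obtain ⟨C, hC, hchain⟩ := chain hG x y
  refine Rich.cast (k := ((((σ₃.length - 1) + (σ₂.length - 1)) + (σ₁.length - 1)) +
    (σ₀.length - 1)) + 1 + 1 + 1 + 1 + 1 + 1 + 1 + 1) ?_ (by simp; omega)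
  refine Rich.cons C hC fun c₁ hc₁ => ?_
  obtain ⟨hxc, D, hD, hchain⟩ := hchain c₁ hc₁
  refine Rich.cons D hD fun c₂ hc₂ => ?_
  obtain ⟨hcc, hcy⟩ := hchain c₂ hc₂
  refine Rich.cons _ hxc fun u₁ hu₁ => Rich.cons _ hxc fun w₁ hw₁ => Rich.cons _ hcc fun u₂ hu₂ =>
    Rich.cons _ hcc fun w₂ hw₂ => Rich.cons _ hcy fun u₃ hu₃ => Rich.cons _ hcy fun w₃ hw₃ => ?_
  simp only [mem_inter, mem_nb_false] at hu₁ hw₁ hu₂ hw₂ hu₃ hw₃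
  refine (rich_link' hG a u₁ h0).bind fun L₀ hL₀ => ?_
  refine (rich_link' hG w₁ u₂ h1).bind fun L₁ hL₁ => ?_
  refine (rich_link' hG w₂ u₃ h2).bind fun L₂ hL₂ => ?_
  refine (rich_link' hG w₃ b h3).mono fun L₃ hL₃ => ?_
  have hop : ∀ {u t w : V}, G u t → G w t → Wk G [true, false] u w (t ::ₘ {w}) :=
    fun h h' => Wk.cons (E_true.2 h) (Wk.single (E_false.2 h'))
  constructor
  · refine ((((((hL₀.append (hop hu₁.2 hw₁.2)).append hL₁).append (hop hu₂.2 hw₂.2)).append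
      hL₂).append (hop hu₃.2 hw₃.2)).append hL₃).congr rfl ?_
    simp only [← Multiset.singleton_add]
    abel
  · refine ((((((hL₀.append (hop hu₁.1 hw₁.1)).append hL₁).append (hop hu₂.1 hw₂.1)).append
      hL₂).append (hop hu₃.1 hw₃.1)).append hL₃).congr rfl ?_
    simp only [← Multiset.singleton_add]
    abel

lemma absorbs_replicate_true {ν : ℝ} (hG : Expander G ν) {l : ℕ} {σ τ : List Bool}
    (hl : 1 ≤ l * ν) (h0 : 1 ≤ σ.length * ν) (h3 : 1 ≤ τ.length * ν) (a b x y : V) :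
    Absorbs G (ν ^ 3 / 3) (σ ++ List.replicate (4 * l + 6) true ++ τ) a b x y := by
  have p0 := length_pos_of_link h0
  have p3 := length_pos_of_link h3
  have hl' : 1 ≤ ((List.replicate l true).length : ℝ) * ν := by simpa using hl
  have pl : 1 ≤ l := by simpa using length_pos_of_link hl'
  obtain ⟨C, hC, hchain⟩ := chain hG x y
  obtain ⟨D, hD, hchain'⟩ := chain hG.op x y
  refine Rich.cast (k := (((((τ.length - 1) + ((List.replicate l true).length - 1)) +
    ((List.replicate l true).length - 1)) + ((List.replicate l true).length - 1)) +
    ((List.replicate l true).length - 1)) + (σ.length - 1) + 1 + 1 + 1 + 1 + 1 + 1 + 1 + 1 + 1 + 1)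
    ?_ (by simp; omega)
  refine Rich.cons C hC fun c₁ hc₁ => ?_
  obtain ⟨hxc, C', hC', hchain⟩ := hchain c₁ hc₁
  refine Rich.cons C' hC' fun c₂ hc₂ => ?_
  obtain ⟨hcc, hcy⟩ := hchain c₂ hc₂
  refine Rich.cons D hD fun d₁ hd₁ => ?_
  obtain ⟨hxd, D', hD', hchain'⟩ := hchain' d₁ hd₁
  refine Rich.cons D' hD' fun d₂ hd₂ => ?_
  obtain ⟨hdd, hdy⟩ := hchain' d₂ hd₂
  refine Rich.cons _ hxc fun a₀ ha₀ => Rich.cons _ hcc fun a₁ ha₁ => Rich.cons _ hcy fun a₂ ha₂ =>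
    Rich.cons _ hxd fun b₀ hb₀ => Rich.cons _ hdd fun b₁ hb₁ => Rich.cons _ hdy fun b₂ hb₂ => ?_
  simp only [mem_inter, mem_nb_false, op] at ha₀ ha₁ ha₂ hb₀ hb₁ hb₂
  refine (rich_link' hG a a₂ h0).bind fun L₀ hL₀ => ?_
  refine (rich_link' hG c₂ a₀ hl').bind fun P₁ hP₁ => ?_
  refine (rich_link' hG b₀ d₂ hl').bind fun P₂ hP₂ => ?_
  refine (rich_link' hG b₂ a₁ hl').bind fun P₃ hP₃ => ?_
  refine (rich_link' hG c₁ d₁ hl').bind fun P₄ hP₄ => ?_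
  refine (rich_link' hG b₁ b h3).mono fun L₃ hL₃ => ?_
  have st : ∀ {u v : V}, G u v → Wk G (List.replicate 1 true) u v {v} :=
    fun h => Wk.single (E_true.2 h)
  constructor
  · refine ((hL₀.append ((((((((((st ha₂.2).append (st hb₂.2)).append hP₃).append
      (st ha₁.2)).append hP₁).append (st ha₀.2)).append hP₄).append (st hb₀.2)).append
      hP₂).append (st hb₁.2))).append hL₃).congr ?_ ?_
    · simp only [List.replicate_append_replicate]
      congr 3; omega
    · simp only [← Multiset.singleton_add]
      abel
  · refine ((hL₀.append ((((((((((st ha₂.1).append hP₁).append (st ha₀.1)).append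
      (st hb₀.1)).append hP₂).append (st hb₂.1)).append hP₃).append (st ha₁.1)).append
      hP₄).append (st hb₁.1))).append hL₃).congr ?_ ?_
    · simp only [List.replicate_append_replicate]
      congr 3; omega
    · simp only [← Multiset.singleton_add]
      abel

lemma absorbs_replicate {ν : ℝ} (hG : Expander G ν) {l : ℕ} {σ τ : List Bool}
    (hl : 1 ≤ l * ν) (h0 : 1 ≤ σ.length * ν) (h3 : 1 ≤ τ.length * ν) (s : Bool) (a b x y : V) :
    Absorbs G (ν ^ 3 / 3) (σ ++ List.replicate (4 * l + 6) s ++ τ) a b x y := by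
  cases s with
  | true => exact absorbs_replicate_true hG hl h0 h3 a b x y
  | false =>
    have h := absorbs_replicate_true hG.op (l := l) (σ := σ.map (!·)) (τ := τ.map (!·)) hl
      (by simpa using h0) (by simpa using h3) a b x y
    have hmap : (σ.map (!·) ++ List.replicate (4 * l + 6) true ++ τ.map (!·)).map (!·) =
        σ ++ List.replicate (4 * l + 6) false ++ τ := by
      simp [Function.comp_def]
    refine Rich.cast (Rich.mono h fun M hM => ?_) (by simp)
    exact ⟨hM.1.op_map.congr hmap rfl, hM.2.op_map.congr hmap rfl⟩

lemma absorbs {ν : ℝ} (hG : Expander G ν) {l : ℕ} (hl : 1 ≤ l * ν) {Q : List Bool}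
    (hQ : Q.length = 3 * (2 * l + 2 * (4 * l + 6))) (a b x y : V) :
    Absorbs G (ν ^ 3 / 3) Q a b x y := by
  have hlen : ∀ {k : ℕ}, l ≤ k → 1 ≤ (k : ℝ) * ν := fun {k} h => by
    refine hl.trans (mul_le_mul_of_nonneg_right ?_ hG.pos.le)
    exact_mod_cast h
  obtain ⟨A, B, C, rfl, hA, hB, hC⟩ : ∃ A B C : List Bool, Q = A ++ B ++ C ∧
      A.length = 2 * l + 2 * (4 * l + 6) ∧
      B.length = 2 * l + 2 * (4 * l + 6) ∧ C.length = 2 * l + 2 * (4 * l + 6) := by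
    set m := 2 * l + 2 * (4 * l + 6)
    refine ⟨Q.take m, (Q.drop m).take m, (Q.drop m).drop m, ?_, ?_, ?_, ?_⟩
    · rw [List.append_assoc, List.take_append_drop, List.take_append_drop]
    all_goals simp [hQ]
    all_goals omega
  rcases split_or_constant l _ A hA with ⟨σ₁, τ₁, rfl, h1, h1'⟩ | ⟨s, σ, τ, rfl, h, h'⟩
  swap
  · have := absorbs_replicate hG hl (hlen h) (τ := τ ++ (B ++ C))
      (hlen (by simp; omega)) s a b x y
    simpa only [List.append_assoc] using this
  rcases split_or_constant l _ B hB with ⟨σ₂, τ₂, rfl, h2, h2'⟩ | ⟨s, σ, τ, rfl, h, h'⟩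
  swap
  · have := absorbs_replicate hG hl (σ := σ₁ ++ [true, false] ++ τ₁ ++ σ) (τ := τ ++ C)
      (hlen (by simp; omega)) (hlen (by simp; omega)) s a b x y
    simpa only [List.append_assoc] using this
  rcases split_or_constant l _ C hC with ⟨σ₃, τ₃, rfl, h3, h3'⟩ | ⟨s, σ, τ, rfl, h, h'⟩
  swap
  · have := absorbs_replicate hG hl (τ := τ)
      (σ := σ₁ ++ [true, false] ++ τ₁ ++ (σ₂ ++ [true, false] ++ τ₂) ++ σ)
      (hlen (by simp; omega)) (hlen h') s a b x y
    simpa only [List.append_assoc] using this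
  have := absorbs_split hG (σ₀ := σ₁) (σ₁ := τ₁ ++ σ₂) (σ₂ := τ₂ ++ σ₃) (σ₃ := τ₃) (hlen h1)
    (hlen (by simp; omega)) (hlen (by simp; omega)) (hlen h3') a b x y
  simpa only [List.append_assoc] using this

end Absorber

section Selection

variable {V : Type*} {G : V → V → Prop}

/-- `M` has no repeated elements and avoids `W`. -/
def Fresh (W : Finset V) (M : Multiset V) : Prop := M.Nodup ∧ ∀ v ∈ M, v ∉ W

lemma Fresh.cons {W : Finset V} {v : V} {M : Multiset V} (hv : v ∉ W)
    (h : Fresh (insert v W) M) : Fresh W (v ::ₘ M) := by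
  refine ⟨Multiset.nodup_cons.2 ⟨fun hM => h.2 v hM (mem_insert_self _ _), h.1⟩, ?_⟩
  intro u hu
  rcases Multiset.mem_cons.1 hu with rfl | hu
  · exact hv
  · exact fun h' => h.2 u hu (mem_insert_of_mem h')

lemma Fresh.add {W : Finset V} {M N : Multiset V} (h : Fresh W M)
    (h' : Fresh (W ∪ M.toFinset) N) : Fresh W (M + N) := by
  refine ⟨Multiset.nodup_add.2 ⟨h.1, h'.1, ?_⟩, fun v hv => ?_⟩
  · rw [Multiset.disjoint_left]
    intro v hv hv'
    exact h'.2 v hv' (mem_union_right _ (Multiset.mem_toFinset.2 hv))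
  · rcases Multiset.mem_add.1 hv with hv | hv
    · exact h.2 v hv
    · exact fun hW => h'.2 v hv (mem_union_left _ hW)

lemma sdiff_card_real (S W : Finset V) : (S.card : ℝ) - W.card ≤ ((S \ W).card : ℝ) := by
  have h := Finset.le_card_sdiff W S
  have h2 : S.card ≤ (S \ W).card + W.card := by omega
  have : (S.card : ℝ) ≤ (S \ W).card + W.card := by exact_mod_cast h2
  linarith

/-- The multiset of entries of a tuple. -/
def entries {k : ℕ} (t : Fin k → V) : Multiset V := (List.ofFn t : Multiset V)

lemma entries_cons {k : ℕ} (v : V) (t : Fin k → V) :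
    entries (Fin.cons v t : Fin (k + 1) → V) = v ::ₘ entries t := by
  simp [entries]

variable [Fintype V]

lemma Rich.count {c : ℝ} (hc : 0 ≤ c) {k : ℕ} {P : Multiset V → Prop} (h : Rich c k P)
    (W : Finset V) (hW : (W.card : ℝ) + k ≤ c / 2 * Fintype.card V) :
    (c / 2 * Fintype.card V) ^ k ≤
      ∑ t : Fin k → V, if P (entries t) ∧ Fresh W (entries t) then (1 : ℝ) else 0 := by
  induction k generalizing P W with
  | zero =>
    have h0 : P 0 := h
    simp [entries, h0, Fresh]
  | succ k ih =>
    obtain ⟨S, hS, h⟩ := h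
    push_cast at hW
    have hn : (0 : ℝ) ≤ Fintype.card V := Nat.cast_nonneg _
    rw [← (Fin.consEquiv fun _ : Fin (k + 1) => V).sum_comp, Fintype.sum_prod_type]
    have h1 : ∀ v ∈ S \ W, (c / 2 * Fintype.card V) ^ k ≤ ∑ t : Fin k → V,
        if P (entries (Fin.consEquiv (fun _ : Fin (k + 1) => V) (v, t))) ∧
          Fresh W (entries (Fin.consEquiv (fun _ : Fin (k + 1) => V) (v, t)))
        then (1 : ℝ) else 0 := by
      intro v hv
      have hcard : ((insert v W).card : ℝ) + k ≤ c / 2 * Fintype.card V := by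
        have : ((insert v W).card : ℝ) ≤ W.card + 1 := by
          exact_mod_cast Finset.card_insert_le v W
        linarith
      refine (ih (h v (mem_sdiff.1 hv).1) (insert v W) hcard).trans ?_
      refine Finset.sum_le_sum fun t _ => ?_
      have : entries (Fin.consEquiv (fun _ : Fin (k + 1) => V) (v, t)) = v ::ₘ entries t :=
        entries_cons v t
      rw [this]
      split_ifs with h1 h2
      · exact le_rfl
      · exact absurd ⟨h1.1, h1.2.cons (mem_sdiff.1 hv).2⟩ h2
      · exact zero_le_one
      · exact le_rfl
    have h2 : c / 2 * (Fintype.card V : ℝ) ≤ ((S \ W).card : ℝ) := by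
      have := sdiff_card_real S W
      have : (0 : ℝ) ≤ k := Nat.cast_nonneg _
      nlinarith
    calc (c / 2 * (Fintype.card V : ℝ)) ^ (k + 1)
        = c / 2 * Fintype.card V * (c / 2 * Fintype.card V) ^ k := pow_succ' _ _
      _ ≤ ((S \ W).card : ℝ) * (c / 2 * Fintype.card V) ^ k :=
        mul_le_mul_of_nonneg_right h2 (by positivity)
      _ ≤ _ := by
        rw [← nsmul_eq_mul]
        refine (Finset.card_nsmul_le_sum _ _ _ h1).trans ?_
        refine Finset.sum_le_sum_of_subset_of_nonneg (subset_univ _) fun v _ _ => ?_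
        exact Finset.sum_nonneg fun t _ => by split_ifs <;> norm_num

/-- The segment `(y, M)` from `a` to `b` can be switched to use `x` instead of `y ∈ U`. -/
def Hits (G : V → V → Prop) (Q : List Bool) (a b y : V) (M : Multiset V) (x : V)
    (U : Finset V) : Prop :=
  y ∈ U ∧ Wk G Q a b (x ::ₘ M)

lemma count_absorbers {c : ℝ} (hc : 0 ≤ c) (hc1 : c ≤ 1) {k : ℕ} {Q : List Bool}
    (hQ : Q.length = k + 2) (a x : V) (hab : ∀ y b, Absorbs G c Q a b x y) (U W : Finset V)
    (hU : c * (Fintype.card V : ℝ) ≤ U.card)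
    (hW : (W.card : ℝ) + (k + 2) ≤ c / 2 * Fintype.card V) :
    (c / 2 * Fintype.card V) ^ (k + 2) ≤ ∑ p : V × V × (Fin k → V),
      if (Fresh W (p.1 ::ₘ p.2.1 ::ₘ entries p.2.2) ∧
        Wk G Q a p.2.1 (p.1 ::ₘ p.2.1 ::ₘ entries p.2.2)) ∧
        Hits G Q a p.2.1 p.1 (p.2.1 ::ₘ entries p.2.2) x U then (1 : ℝ) else 0 := by
  have hn : (0 : ℝ) ≤ Fintype.card V := Nat.cast_nonneg _
  have hk : (0 : ℝ) ≤ k := Nat.cast_nonneg _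
  have hr : 0 ≤ c / 2 * (Fintype.card V : ℝ) := by positivity
  have ins : ∀ (v : V) (S : Finset V), ((insert v S).card : ℝ) ≤ S.card + 1 := fun v S => by
    exact_mod_cast Finset.card_insert_le v S
  have h1 : ∀ y ∈ U \ W, ∀ b ∈ univ \ (insert y W), (c / 2 * Fintype.card V) ^ k ≤
      ∑ t : Fin k → V, if (Fresh W (y ::ₘ b ::ₘ entries t) ∧
        Wk G Q a b (y ::ₘ b ::ₘ entries t)) ∧ Hits G Q a b y (b ::ₘ entries t) x U
        then (1 : ℝ) else 0 := by
    intro y hy b hb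
    have h := hab y b
    rw [Absorbs, hQ] at h
    have hcard : ((insert b (insert y W)).card : ℝ) + k ≤ c / 2 * Fintype.card V := by
      linarith [ins b (insert y W), ins y W]
    refine (h.count hc (insert b (insert y W)) hcard).trans (Finset.sum_le_sum fun t _ => ?_)
    split_ifs with h1 h2
    · exact le_rfl
    · exact absurd ⟨⟨(h1.2.cons (mem_sdiff.1 hb).2).cons (mem_sdiff.1 hy).2, h1.1.1⟩,
        (mem_sdiff.1 hy).1, h1.1.2⟩ h2
    · exact zero_le_one
    · exact le_rfl
  have nn : ∀ y b : V, 0 ≤ ∑ t : Fin k → V, if (Fresh W (y ::ₘ b ::ₘ entries t) ∧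
        Wk G Q a b (y ::ₘ b ::ₘ entries t)) ∧ Hits G Q a b y (b ::ₘ entries t) x U
        then (1 : ℝ) else 0 :=
    fun y b => Finset.sum_nonneg fun t _ => by split_ifs <;> norm_num
  have h2 : ∀ y ∈ U \ W, (c / 2 * Fintype.card V) ^ (k + 1) ≤
      ∑ b : V, ∑ t : Fin k → V, if (Fresh W (y ::ₘ b ::ₘ entries t) ∧
        Wk G Q a b (y ::ₘ b ::ₘ entries t)) ∧ Hits G Q a b y (b ::ₘ entries t) x U
        then (1 : ℝ) else 0 := by
    intro y hy
    have hB : c / 2 * (Fintype.card V : ℝ) ≤ ((univ \ (insert y W)).card : ℝ) := by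
      have h3 := sdiff_card_real univ (insert y W)
      rw [Finset.card_univ] at h3
      have := ins y W
      nlinarith
    rw [pow_succ']
    refine (mul_le_mul_of_nonneg_right hB (by positivity)).trans ?_
    rw [← nsmul_eq_mul]
    exact (Finset.card_nsmul_le_sum _ _ _ (h1 y hy)).trans
      (Finset.sum_le_sum_of_subset_of_nonneg (subset_univ _) fun b _ _ => nn y b)
  have hB : c / 2 * (Fintype.card V : ℝ) ≤ ((U \ W).card : ℝ) := by
    have h3 := sdiff_card_real U W
    nlinarith
  rw [Fintype.sum_prod_type]
  simp only [Fintype.sum_prod_type]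
  rw [pow_succ']
  refine (mul_le_mul_of_nonneg_right hB (by positivity)).trans ?_
  rw [← nsmul_eq_mul]
  exact (Finset.card_nsmul_le_sum _ _ _ h2).trans
    (Finset.sum_le_sum_of_subset_of_nonneg (subset_univ _)
      fun y _ _ => Finset.sum_nonneg fun b _ => nn y b)

lemma exists_absorber {c : ℝ} (hc : 0 < c) (hc1 : c ≤ 1) (hV : 0 < Fintype.card V)
    {k : ℕ} {Q : List Bool}
    (hQ : Q.length = k + 2) (a : V) (hab : ∀ x y b, Absorbs G c Q a b x y)
    {ι : Type*} [Fintype ι] [Nonempty ι] (x : ι → V) (U : ι → Finset V)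
    (hU : ∀ i, c * (Fintype.card V : ℝ) ≤ (U i).card) (w : ι → ℝ) (hw : ∀ i, 0 ≤ w i)
    (W : Finset V) (hW : (W.card : ℝ) + (k + 2) ≤ c / 2 * Fintype.card V) :
    ∃ (y b : V) (M : Multiset V), Fresh W (y ::ₘ M) ∧ Wk G Q a b (y ::ₘ M) ∧
      (c / 2) ^ (k + 2) * ∑ i, w i ≤
        ∑ i, w i * if Hits G Q a b y M (x i) (U i) then (1 : ℝ) else 0 := by
  have hn : (0 : ℝ) < Fintype.card V := by exact_mod_cast hV
  set n : ℝ := (Fintype.card V : ℝ) with hnd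
  set 𝒱 : Finset (V × V × (Fin k → V)) := univ.filter fun p =>
    Fresh W (p.1 ::ₘ p.2.1 ::ₘ entries p.2.2) ∧
      Wk G Q a p.2.1 (p.1 ::ₘ p.2.1 ::ₘ entries p.2.2) with h𝒱
  have hcount : ∀ i, (c / 2 * n) ^ (k + 2) ≤ ∑ p ∈ 𝒱,
      if Hits G Q a p.2.1 p.1 (p.2.1 ::ₘ entries p.2.2) (x i) (U i) then (1 : ℝ) else 0 := by
    intro i
    have h := count_absorbers hc.le hc1 hQ a (x i) (hab (x i)) (U i) W (hU i) hW
    simp only [ite_and] at h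
    rw [h𝒱, Finset.sum_filter]
    simpa only [ite_and] using h
  have hne : 𝒱.Nonempty := by
    rw [Finset.nonempty_iff_ne_empty]
    intro h0
    have h := hcount (Classical.arbitrary ι)
    rw [h0, Finset.sum_empty] at h
    have : 0 < (c / 2 * n) ^ (k + 2) := by positivity
    linarith
  have hcard : (𝒱.card : ℝ) ≤ n ^ (k + 2) := by
    have h := Finset.card_le_univ 𝒱
    simp only [Fintype.card_prod, Fintype.card_fun, Fintype.card_fin] at h
    have h' : (𝒱.card : ℝ) ≤ n * (n * n ^ k) := by rw [hnd]; exact_mod_cast h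
    rw [pow_succ', pow_succ']
    exact h'
  have hsum : ∑ _p ∈ 𝒱, (c / 2) ^ (k + 2) * ∑ i, w i ≤ ∑ p ∈ 𝒱, ∑ i, w i *
      if Hits G Q a p.2.1 p.1 (p.2.1 ::ₘ entries p.2.2) (x i) (U i) then (1 : ℝ) else 0 := by
    rw [Finset.sum_const, nsmul_eq_mul, Finset.sum_comm]
    have h1 : (𝒱.card : ℝ) * ((c / 2) ^ (k + 2) * ∑ i, w i) ≤
        n ^ (k + 2) * ((c / 2) ^ (k + 2) * ∑ i, w i) :=
      mul_le_mul_of_nonneg_right hcard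
        (mul_nonneg (by positivity) (Finset.sum_nonneg fun i _ => hw i))
    refine h1.trans ?_
    rw [← mul_assoc, ← mul_pow, mul_comm n, Finset.mul_sum]
    refine Finset.sum_le_sum fun i _ => ?_
    rw [← Finset.mul_sum, mul_comm]
    exact mul_le_mul_of_nonneg_left (hcount i) (hw i)
  obtain ⟨p, hp, h⟩ := Finset.exists_le_of_sum_le hne hsum
  rw [h𝒱, mem_filter] at hp
  exact ⟨p.1, p.2.1, p.2.1 ::ₘ entries p.2.2, hp.2.1, hp.2.2, h⟩

lemma exists_absorber_sequence {c : ℝ} (hc : 0 < c) (hc1 : c ≤ 1) (hV : 0 < Fintype.card V)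
    {k : ℕ} {ι : Type*} [Fintype ι] [Nonempty ι] (x : ι → V) (U : ι → Finset V)
    (hU : ∀ i, c * (Fintype.card V : ℝ) ≤ (U i).card) (N : ℕ) (Q : ℕ → List Bool)
    (hQ : ∀ i < N, (Q i).length = k + 2)
    (hab : ∀ i < N, ∀ a b x y, Absorbs G c (Q i) a b x y) (e₀ : V) (W : Finset V)
    (hW : (W.card : ℝ) + N * (k + 2) ≤ c / 2 * Fintype.card V)
    (w : ι → ℝ) (hw : ∀ i, 0 ≤ w i) :
    ∃ (e y : ℕ → V) (M : ℕ → Multiset V), e 0 = e₀ ∧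
      (∀ i < N, Wk G (Q i) (e i) (e (i + 1)) (y i ::ₘ M i)) ∧
      Fresh W (∑ i ∈ range N, (y i ::ₘ M i)) ∧
      ∑ q, w q * ∏ i ∈ range N, (if Hits G (Q i) (e i) (e (i + 1)) (y i) (M i) (x q) (U q)
        then (1 / 2 : ℝ) else 1) ≤ (1 - (c / 2) ^ (k + 2) / 2) ^ N * ∑ q, w q := by
  induction N generalizing Q e₀ W w with
  | zero =>
    refine ⟨fun _ => e₀, fun _ => e₀, fun _ => 0, rfl, by simp, by simp [Fresh], by simp⟩
  | succ N ih =>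
    push_cast at hW
    have hk : (0 : ℝ) ≤ k := Nat.cast_nonneg _
    have hN : (0 : ℝ) ≤ N := Nat.cast_nonneg _
    obtain ⟨y, b, M, hf, hwk, hsum⟩ := exists_absorber hc hc1 hV (hQ 0 (Nat.succ_pos _)) e₀
      (fun x y b => hab 0 (Nat.succ_pos _) e₀ b x y) x U hU w hw W (by nlinarith)
    set w' : ι → ℝ := fun q => w q * if Hits G (Q 0) e₀ b y M (x q) (U q)
      then (1 / 2 : ℝ) else 1 with hw'
    have hcard : (((W ∪ (y ::ₘ M).toFinset).card : ℕ) : ℝ) + N * (k + 2) ≤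
        c / 2 * Fintype.card V := by
      have h1 := Finset.card_union_le W (y ::ₘ M).toFinset
      have h2 := Multiset.toFinset_card_le (y ::ₘ M)
      rw [hwk.card, hQ 0 (Nat.succ_pos _)] at h2
      have h3 : (W ∪ (y ::ₘ M).toFinset).card ≤ W.card + (k + 2) := by omega
      have h4 : ((W ∪ (y ::ₘ M).toFinset).card : ℝ) ≤ W.card + (k + 2) := by exact_mod_cast h3
      nlinarith
    obtain ⟨e', y', M', he, hwk', hf', hsum'⟩ := ih (fun i => Q (i + 1))
      (fun i hi => hQ (i + 1) (by omega)) (fun i hi => hab (i + 1) (by omega)) b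
      (W ∪ (y ::ₘ M).toFinset) hcard w' (fun q => mul_nonneg (hw q) (by split_ifs <;> norm_num))
    refine ⟨fun i => Nat.casesOn i e₀ e', fun i => Nat.casesOn i y y',
      fun i => Nat.casesOn i M M', rfl, ?_, ?_, ?_⟩
    · intro i hi
      cases i with
      | zero => simpa [he] using hwk
      | succ i => exact hwk' i (by omega)
    · rw [Finset.sum_range_succ', add_comm]
      exact hf.add hf'
    · have h1 : ∑ q, w' q ≤ (1 - (c / 2) ^ (k + 2) / 2) * ∑ q, w q := by
        have : ∀ q, w' q = w q - (w q * if Hits G (Q 0) e₀ b y M (x q) (U q)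
            then (1 : ℝ) else 0) / 2 := by
          intro q
          simp only [hw']
          split_ifs <;> ring
        simp only [this, Finset.sum_sub_distrib, ← Finset.sum_div]
        linarith
      have hc2 : (c / 2) ^ (k + 2) ≤ 1 := pow_le_one₀ (by positivity) (by linarith)
      have h2 := mul_le_mul_of_nonneg_left h1
        (show 0 ≤ (1 - (c / 2) ^ (k + 2) / 2) ^ N by
          apply pow_nonneg; linarith)
      rw [← mul_assoc, ← pow_succ] at h2
      refine le_trans (le_of_eq ?_) (hsum'.trans h2)
      refine Finset.sum_congr rfl fun q _ => ?_
      rw [Finset.prod_range_succ', hw']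
      simp only [he]
      rw [mul_assoc, mul_comm (∏ _ ∈ _, _)]
      rfl

/-- Sequential choice of absorbers such that every requirement is hit at least `h` times. -/
lemma exists_absorbers {c : ℝ} (hc : 0 < c) (hc1 : c ≤ 1) (hV : 0 < Fintype.card V)
    {k : ℕ} {ι : Type*} [Fintype ι] [Nonempty ι] (x : ι → V) (U : ι → Finset V)
    (hU : ∀ i, c * (Fintype.card V : ℝ) ≤ (U i).card) (N h : ℕ) (Q : ℕ → List Bool)
    (hQ : ∀ i < N, (Q i).length = k + 2)
    (hab : ∀ i < N, ∀ a b x y, Absorbs G c (Q i) a b x y) (e₀ : V)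
    (hW : 1 + (N : ℝ) * (k + 2) ≤ c / 2 * Fintype.card V)
    (hh : (Fintype.card ι : ℝ) * (1 - (c / 2) ^ (k + 2) / 2) ^ N ≤ (1 / 2) ^ h) :
    ∃ (e y : ℕ → V) (M : ℕ → Multiset V), e 0 = e₀ ∧
      (∀ i < N, Wk G (Q i) (e i) (e (i + 1)) (y i ::ₘ M i)) ∧
      Fresh {e₀} (∑ i ∈ range N, (y i ::ₘ M i)) ∧
      ∀ q, h ≤ ((range N).filter fun i =>
        Hits G (Q i) (e i) (e (i + 1)) (y i) (M i) (x q) (U q)).card := by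
  obtain ⟨e, y, M, he, hwk, hf, hsum⟩ := exists_absorber_sequence hc hc1 hV x U hU N Q hQ hab e₀
    {e₀} (by simpa using hW) (fun _ => 1) (fun _ => zero_le_one)
  refine ⟨e, y, M, he, hwk, hf, fun q => ?_⟩
  simp only [one_mul, Finset.sum_const, Finset.card_univ, nsmul_eq_mul, mul_one] at hsum
  have h1 : (1 / 2 : ℝ) ^ ((range N).filter fun i =>
        Hits G (Q i) (e i) (e (i + 1)) (y i) (M i) (x q) (U q)).card ≤ (1 / 2) ^ h := by
    refine le_trans ?_ (hsum.trans (by rw [mul_comm]; exact hh))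
    have h2 : ∀ q, 0 ≤ ∏ i ∈ range N, (if Hits G (Q i) (e i) (e (i + 1)) (y i) (M i) (x q) (U q)
        then (1 / 2 : ℝ) else 1) := fun q => Finset.prod_nonneg fun i _ => by
          split_ifs <;> norm_num
    refine le_trans (le_of_eq ?_) (Finset.single_le_sum (fun q _ => h2 q) (mem_univ q))
    rw [Finset.prod_ite]
    simp
  by_contra! hlt
  have := pow_lt_pow_right_of_lt_one₀ (show (0 : ℝ) < 1 / 2 by norm_num) (by norm_num) hlt
  linarith

end Selection

section Filling

variable {V : Type*} [Fintype V] {G : V → V → Prop}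

lemma exists_split_card {α : Type*} (X : Multiset α) {a b : ℕ} (h : Multiset.card X = a + b) :
    ∃ X₁ X₂, X = X₁ + X₂ ∧ Multiset.card X₁ = a ∧ Multiset.card X₂ = b := by
  induction X using Quotient.inductionOn with
  | h L =>
    have hL : L.length = a + b := by simpa using h
    refine ⟨(L.take a : Multiset α), (L.drop a : Multiset α), ?_, by simp; omega, by simp; omega⟩
    rw [Multiset.coe_add, List.take_append_drop]
    rfl

lemma sum_singleton_update {Y : ℕ → V} {N i : ℕ} (hi : i < N) (x : V) :
    ∑ j ∈ range N, ({Function.update Y i x j} : Multiset V) + {Y i} =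
      ∑ j ∈ range N, ({Y j} : Multiset V) + {x} := by
  rw [← Finset.add_sum_erase _ _ (mem_range.2 hi), ← Finset.add_sum_erase (range N)
    (fun j => ({Y j} : Multiset V)) (mem_range.2 hi)]
  have : ∑ j ∈ (range N).erase i, ({Function.update Y i x j} : Multiset V) =
      ∑ j ∈ (range N).erase i, ({Y j} : Multiset V) :=
    Finset.sum_congr rfl fun j hj => by rw [Function.update_of_ne (ne_of_mem_erase hj)]
  rw [this, Function.update_self]
  abel

/-- A sequence of consecutive switchable segments. -/
structure Absorbers (G : V → V → Prop) (ν : ℝ) (N h : ℕ) where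
  /-- direction patterns of the segments -/
  Q : ℕ → List Bool
  /-- endpoints of the segments -/
  e : ℕ → V
  /-- the switchable vertices -/
  y : ℕ → V
  /-- the other vertices -/
  M : ℕ → Multiset V
  wk : ∀ i < N, Wk G (Q i) (e i) (e (i + 1)) (y i ::ₘ M i)
  hits : ∀ (x z p : V) (s s' : Bool) (σ : List Bool), z ∈ T G ν p (s :: s' :: σ) →
    h ≤ ((range N).filter fun i =>
      Hits G (Q i) (e i) (e (i + 1)) (y i) (M i) x (nb G s z ∩ T G ν p (s' :: σ))).card

variable {ν : ℝ} {N h : ℕ}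

/-- `Y` is a valid choice for the switched vertices, differing from the original one on at most
`k` segments. -/
def Absorbers.State (A : Absorbers G ν N h) (k : ℕ) (Y : ℕ → V) : Prop :=
  (∀ i < N, Wk G (A.Q i) (A.e i) (A.e (i + 1)) (Y i ::ₘ A.M i)) ∧
    ∃ I : Finset ℕ, I.card ≤ k ∧ ∀ i, i ∉ I → Y i = A.y i

lemma Absorbers.fill_aux (A : Absorbers G ν N h) (p : V) (σ : List Bool) :
    ∀ (s : Bool) (z : V), z ∈ T G ν p (s :: σ) → ∀ (X : Multiset V) (k : ℕ) (Y : ℕ → V),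
      Multiset.card X = σ.length → A.State k Y → k + σ.length ≤ h →
      ∃ Y' M, A.State (k + σ.length) Y' ∧ Wk G (s :: σ) z p (p ::ₘ M) ∧
        ∑ j ∈ range N, ({Y' j} : Multiset V) + M = ∑ j ∈ range N, ({Y j} : Multiset V) + X := by
  induction σ with
  | nil =>
    intro s z hz X k Y hX hY hk
    have : X = 0 := by simpa using hX
    subst this
    simp only [T] at hz
    exact ⟨Y, 0, hY, Wk.single (mem_nb.1 (mem_nb_swap.1 hz)), rfl⟩
  | cons s' σ ih =>
    intro s z hz X k Y hX hY hk
    obtain ⟨x, X, rfl, hX₀⟩ : ∃ x X₀, X = x ::ₘ X₀ ∧ Multiset.card X₀ = σ.length := by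
      obtain ⟨x, hx⟩ := Multiset.card_pos_iff_exists_mem.1 (by rw [hX]; simp)
      obtain ⟨X₀, rfl⟩ := Multiset.exists_cons_of_mem hx
      exact ⟨x, X₀, rfl, by simpa using hX⟩
    rw [List.length_cons] at hk ⊢
    obtain ⟨hYv, I, hI, hYI⟩ := hY
    obtain ⟨i, hi, hiI⟩ := Finset.exists_mem_notMem_of_card_lt_card
      (lt_of_lt_of_le (show I.card < h by omega) (A.hits _ z p s s' σ hz))
    simp only [mem_filter, mem_range] at hi
    obtain ⟨hiN, hU, hwk⟩ := hi
    rw [mem_inter] at hU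
    have hstate : A.State (k + 1) (Function.update Y i x) := by
      refine ⟨fun j hj => ?_, insert i I, (card_insert_le _ _).trans (by omega), fun j hj => ?_⟩
      · by_cases hji : j = i
        · subst hji; rw [Function.update_self]; exact hwk
        · rw [Function.update_of_ne hji]; exact hYv j hj
      · simp only [mem_insert, not_or] at hj
        rw [Function.update_of_ne hj.1, hYI j hj.2]
    obtain ⟨Y', M, hY', hM, hsum⟩ := ih s' (A.y i) hU.2 X (k + 1) _ hX₀ hstate (by omega)
    refine ⟨Y', A.y i ::ₘ M, by rwa [show k + (σ.length + 1) = k + 1 + σ.length by omega], ?_, ?_⟩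
    · rw [Multiset.cons_swap]
      exact Wk.cons (mem_nb.1 hU.1) hM
    · have h1 := sum_singleton_update (Y := Y) hiN x
      rw [hYI i hiI] at h1
      rw [← Multiset.singleton_add, ← Multiset.singleton_add, add_left_comm, hsum, ← add_assoc,
        add_comm {A.y i}, h1, add_assoc]

lemma Absorbers.fill (A : Absorbers G ν N h) (hG : Expander G ν) (z p : V) {σ : List Bool}
    (hσ : 1 ≤ σ.length * ν) {X : Multiset V} {k : ℕ} {Y : ℕ → V}
    (hX : Multiset.card X = σ.length - 1) (hY : A.State k Y) (hk : k + (σ.length - 1) ≤ h) :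
    ∃ Y' M, A.State (k + (σ.length - 1)) Y' ∧ Wk G σ z p (p ::ₘ M) ∧
      ∑ j ∈ range N, ({Y' j} : Multiset V) + M = ∑ j ∈ range N, ({Y j} : Multiset V) + X := by
  have h1 := T_eq_univ hG p hσ
  cases σ with
  | nil => norm_num at hσ
  | cons s σ =>
    exact A.fill_aux p σ s z (by rw [h1]; exact mem_univ _) X k Y (by simpa using hX) hY
      (by simpa using hk)

/-- A connecting pattern followed by a given walk. -/
structure Block (G : V → V → Prop) where
  /-- the connecting pattern -/
  C : List Bool
  /-- the pattern of the walk -/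
  β : List Bool
  /-- start of the walk -/
  p : V
  /-- end of the walk -/
  q : V
  /-- vertices of the walk -/
  M : Multiset V
  wk : Wk G β p q M

lemma Absorbers.fill_blocks (A : Absorbers G ν N h) (hG : Expander G ν) (t : V)
    {Cf : List Bool} (hCf : 1 ≤ Cf.length * ν) (L : List (Block G))
    (hL : ∀ B ∈ L, 1 ≤ B.C.length * ν) :
    ∀ (z : V) (X : Multiset V) (k : ℕ) (Y : ℕ → V),
      Multiset.card X = (L.map fun B => B.C.length - 1).sum + (Cf.length - 1) →
      A.State k Y → k + Multiset.card X ≤ h →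
      ∃ Y' M, A.State (k + Multiset.card X) Y' ∧
        Wk G (L.flatMap (fun B => B.C ++ B.β) ++ Cf) z t (t ::ₘ M) ∧
        ∑ j ∈ range N, ({Y' j} : Multiset V) + M =
          ∑ j ∈ range N, ({Y j} : Multiset V) + X + (L.map fun B => B.p ::ₘ B.M).sum := by
  induction L with
  | nil =>
    intro z X k Y hX hY hk
    simp only [List.map_nil, List.sum_nil, zero_add] at hX
    rw [hX] at hk ⊢
    obtain ⟨Y', M, h1, h2, h3⟩ := A.fill hG z t hCf hX hY hk
    exact ⟨Y', M, h1, by simpa using h2, by simpa using h3⟩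
  | cons B L ih =>
    intro z X k Y hX hY hk
    rw [List.map_cons, List.sum_cons, add_assoc] at hX
    obtain ⟨X₁, X₂, rfl, hX₁, hX₂⟩ := exists_split_card X hX
    rw [Multiset.card_add, hX₁] at hk ⊢
    obtain ⟨Y₁, M₁, h1, h2, h3⟩ := A.fill hG z B.p (hL B (by simp)) hX₁ hY (by omega)
    obtain ⟨Y₂, M₂, h4, h5, h6⟩ := ih (fun B' hB' => hL B' (by simp [hB'])) B.q X₂ _ Y₁ hX₂ h1
      (by omega)
    refine ⟨Y₂, B.p ::ₘ M₁ + (B.M + M₂), by rwa [← add_assoc], ?_, ?_⟩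
    · refine (h2.append (B.wk.append h5)).congr (by simp) ?_
      simp only [← Multiset.singleton_add]
      abel
    · have : ∑ j ∈ range N, ({Y₂ j} : Multiset V) + (B.p ::ₘ M₁ + (B.M + M₂)) =
          (∑ j ∈ range N, ({Y₂ j} : Multiset V) + M₂) + (B.p ::ₘ B.M) + M₁ := by
        simp only [← Multiset.singleton_add]
        abel
      rw [this, h6, List.map_cons, List.sum_cons]
      have h3' : ∑ j ∈ range N, ({Y₁ j} : Multiset V) + X₂ + (L.map fun B => B.p ::ₘ B.M).sum +
          (B.p ::ₘ B.M) + M₁ = (∑ j ∈ range N, ({Y₁ j} : Multiset V) + M₁) + X₂ +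
            (L.map fun B => B.p ::ₘ B.M).sum + (B.p ::ₘ B.M) := by abel
      rw [h3', h3]
      abel

/-- The closed walk obtained by traversing all switchable segments and then the blocks. -/
lemma Absorbers.closed_walk (A : Absorbers G ν N h) (hG : Expander G ν)
    {Cf : List Bool} (hCf : 1 ≤ Cf.length * ν) (L : List (Block G))
    (hL : ∀ B ∈ L, 1 ≤ B.C.length * ν) (X : Multiset V)
    (hX : Multiset.card X = (L.map fun B => B.C.length - 1).sum + (Cf.length - 1))
    (hXh : Multiset.card X ≤ h) :
    Wk G ((List.range N).flatMap A.Q ++ (L.flatMap (fun B => B.C ++ B.β) ++ Cf))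
      (A.e 0) (A.e 0) ({A.e 0} + ∑ i ∈ range N, (A.y i ::ₘ A.M i) + X +
        (L.map fun B => B.p ::ₘ B.M).sum) := by
  obtain ⟨Y, M, ⟨hY, -⟩, hwk, hsum⟩ := A.fill_blocks hG (A.e 0) hCf L hL (A.e N) X 0 A.y hX
    ⟨A.wk, ∅, by simp, fun _ _ => rfl⟩ (by simpa using hXh)
  have habs : ∀ m ≤ N, Wk G ((List.range m).flatMap A.Q) (A.e 0) (A.e m)
      (∑ i ∈ range m, (Y i ::ₘ A.M i)) := by
    intro m hm
    induction m with
    | zero => simpa using Wk.nil _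
    | succ m ih =>
      rw [List.range_succ, List.flatMap_append, Finset.sum_range_succ]
      exact (ih (by omega)).append (by simpa using hY m (by omega))
  refine ((habs N le_rfl).append hwk).congr rfl ?_
  have e1 : ∀ Z : ℕ → V, ∑ i ∈ range N, (Z i ::ₘ A.M i) =
      ∑ i ∈ range N, ({Z i} : Multiset V) + ∑ i ∈ range N, A.M i := by
    intro Z
    simp only [← Multiset.singleton_add, Finset.sum_add_distrib]
  rw [e1, e1, ← Multiset.singleton_add]
  have : ∑ i ∈ range N, ({Y i} : Multiset V) + ∑ i ∈ range N, A.M i + ({A.e 0} + M) =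
      (∑ i ∈ range N, ({Y i} : Multiset V) + M) + (∑ i ∈ range N, A.M i + {A.e 0}) := by abel
  rw [this, hsum]
  abel

end Filling

section Permutations

variable {V : Type*} [Fintype V] {G : V → V → Prop}

lemma hall_permutation {G : V → V → Prop}
    (h : ∀ S : Finset V, S.card ≤ (S.biUnion (nb G true)).card) :
    ∃ π : Equiv.Perm V, ∀ v, G v (π v) := by
  obtain ⟨f, hf, hfG⟩ := (Finset.all_card_le_biUnion_card_iff_exists_injective (nb G true)).1 h
  exact ⟨Equiv.ofBijective f (Finite.injective_iff_bijective.1 hf),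
    fun v => mem_nb_true.1 (hfG v)⟩

lemma exists_permutations {ν : ℝ} (hG : Expander G ν) (r : ℕ)
    (hr : (r : ℝ) ≤ ν * Fintype.card V) :
    ∃ π : Fin r → Equiv.Perm V, (∀ j v, G v (π j v)) ∧
      ∀ v, Function.Injective fun j => π j v := by
  induction r with
  | zero => exact ⟨fun j => j.elim0, fun j => j.elim0, fun _ j => j.elim0⟩
  | succ r ih =>
    push_cast at hr
    obtain ⟨π, hπ, hinj⟩ := ih (by linarith)
    have hn : (0 : ℝ) < Fintype.card V := by exact_mod_cast hG.card_pos
    obtain ⟨σ, hσ⟩ := hall_permutation (G := fun v w => G v w ∧ ∀ j, w ≠ π j v) (fun S => by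
      rcases S.eq_empty_or_nonempty with rfl | ⟨v, hv⟩
      · simp
      rcases le_or_gt (3 / 8 * (Fintype.card V : ℝ)) (S.card : ℝ) with hS | hS
      · have h1 := hG.exp false S hS
        have h2 : S.card ≤ (rn G ν false S).card := by
          have h3 : (S.card : ℝ) ≤ ((rn G ν false S).card : ℝ) := by
            refine le_trans (le_min ?_ ?_) h1
            · exact_mod_cast Finset.card_le_univ S
            · have := mul_pos hG.pos hn; linarith
          exact_mod_cast h3
        refine h2.trans (Finset.card_le_card fun w hw => ?_)
        rw [mem_rn] at hw
        have h4 : (univ.image fun j => (π j).symm w).card < (nb G false w ∩ S).card := by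
          have h5 : (univ.image fun j => (π j).symm w).card ≤ r :=
            Finset.card_image_le.trans (by simp)
          have h6 : (r : ℝ) < (nb G false w ∩ S).card := by linarith
          exact lt_of_le_of_lt h5 (by exact_mod_cast h6)
        obtain ⟨u, hu, hu'⟩ := Finset.exists_mem_notMem_of_card_lt_card h4
        rw [mem_inter, mem_nb_false] at hu
        refine mem_biUnion.2 ⟨u, hu.2, mem_nb_true.2 ⟨hu.1, fun j hj => hu' ?_⟩⟩
        exact mem_image.2 ⟨j, mem_univ _, by rw [hj, Equiv.symm_apply_apply]⟩
      · have h1 := hG.deg true v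
        have h2 : (nb G true v).card ≤
            (nb (fun v w => G v w ∧ ∀ j, w ≠ π j v) true v).card + r := by
          have h3 : nb G true v ⊆ nb (fun v w => G v w ∧ ∀ j, w ≠ π j v) true v ∪
              univ.image (fun j => π j v) := by
            intro w hw
            rw [mem_nb_true] at hw
            by_cases hj : ∃ j, w = π j v
            · obtain ⟨j, rfl⟩ := hj
              exact mem_union_right _ (mem_image.2 ⟨j, mem_univ _, rfl⟩)
            · push Not at hj
              exact mem_union_left _ (mem_nb_true.2 ⟨hw, hj⟩)
          refine (Finset.card_le_card h3).trans ((Finset.card_union_le _ _).trans ?_)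
          exact Nat.add_le_add_left (Finset.card_image_le.trans (by simp)) _
        have h4 := Finset.card_le_card (Finset.subset_biUnion_of_mem
          (nb (fun v w => G v w ∧ ∀ j, w ≠ π j v) true) hv)
        have h5 : ((nb G true v).card : ℝ) ≤
            ((S.biUnion (nb (fun v w => G v w ∧ ∀ j, w ≠ π j v) true)).card : ℝ) + r := by
          exact_mod_cast h2.trans (Nat.add_le_add_right h4 _)
        have h6 : (S.card : ℝ) ≤
            ((S.biUnion (nb (fun v w => G v w ∧ ∀ j, w ≠ π j v) true)).card : ℝ) := by
          have := mul_pos hG.pos hn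
          nlinarith
        exact_mod_cast h6)
    refine ⟨Fin.cons σ π, fun j v => ?_, fun v i j hij => ?_⟩
    · refine Fin.cases ?_ (fun j => ?_) j
      · exact (hσ v).1
      · exact hπ j v
    · revert hij
      refine Fin.cases ?_ (fun i => ?_) i <;> refine Fin.cases ?_ (fun j => ?_) j
      · intro _; rfl
      · intro hij; exact absurd hij ((hσ v).2 j)
      · intro hij; exact absurd hij.symm ((hσ v).2 i)
      · intro hij; exact congrArg Fin.succ (hinj v hij)

end Permutations

section Labelling

lemma exp_sub_sq_le {x : ℝ} (hx : |x| ≤ 1 / 2) : Real.exp (x - 2 * x ^ 2) ≤ 1 + x := by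
  rw [abs_le] at hx
  have h1 := Real.add_one_le_exp (-(x - 2 * x ^ 2))
  rw [Real.exp_neg] at h1
  have h2 : 0 < -(x - 2 * x ^ 2) + 1 := by nlinarith
  have h3 : Real.exp (x - 2 * x ^ 2) ≤ (-(x - 2 * x ^ 2) + 1)⁻¹ := by
    rw [le_inv_comm₀ (Real.exp_pos _) h2]; exact h1
  refine h3.trans ?_
  rw [inv_le_iff_one_le_mul₀ h2]
  nlinarith [sq_nonneg x, mul_nonneg (sq_nonneg x) (show 0 ≤ 1 + 2 * x by linarith)]

variable {V Λ : Type*} [Fintype V] [Fintype Λ]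

/-- The deviation at `v` of the indicator of `f v = l` from its mean. -/
noncomputable def dev (f : V → Λ) (l : Λ) (v : V) : ℝ :=
  (if f v = l then 1 else 0) - 1 / (Fintype.card Λ : ℝ)

lemma sum_dev (f : V → Λ) (l : Λ) (D : Finset V) :
    ∑ v ∈ D, dev f l v = ((D.filter fun v => f v = l).card : ℝ) - D.card / Fintype.card Λ := by
  unfold dev
  rw [Finset.sum_sub_distrib, Finset.sum_boole, Finset.sum_const, nsmul_eq_mul]
  ring

lemma abs_dev_le (f : V → Λ) (l : Λ) (v : V) : |dev f l v| ≤ 1 := by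
  have h1 : (1 : ℝ) ≤ Fintype.card Λ := by
    exact_mod_cast Fintype.card_pos_iff.2 ⟨l⟩
  have h2 : 1 / (Fintype.card Λ : ℝ) ≤ 1 := by
    rw [div_le_one (by linarith)]; exact h1
  have h3 : 0 < 1 / (Fintype.card Λ : ℝ) := by positivity
  unfold dev
  rw [abs_le]
  split_ifs <;> constructor <;> linarith

lemma sum_prod_dev [Nonempty Λ] (t : ℝ) (l : Λ) (D : Finset V) :
    ∑ f : V → Λ, ∏ v ∈ D, (1 + t * dev f l v) = (Fintype.card Λ : ℝ) ^ Fintype.card V := by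
  have hN : (0 : ℝ) < Fintype.card Λ := by exact_mod_cast Fintype.card_pos
  have h1 : ∀ f : V → Λ, ∏ v ∈ D, (1 + t * dev f l v) =
      ∏ v, if v ∈ D then (1 + t * ((if f v = l then 1 else 0) - 1 / (Fintype.card Λ : ℝ)))
        else 1 := by
    intro f
    rw [Finset.prod_ite_mem, univ_inter]
    rfl
  have h2 := Finset.prod_univ_sum (fun _ : V => (univ : Finset Λ)) (fun v m =>
    if v ∈ D then (1 + t * ((if m = l then 1 else 0) - 1 / (Fintype.card Λ : ℝ))) else 1)
  rw [Fintype.piFinset_univ] at h2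
  simp only [h1]
  rw [← h2]
  have h3 : ∀ v : V, ∑ m : Λ, (if v ∈ D then
      (1 + t * ((if m = l then 1 else 0) - 1 / (Fintype.card Λ : ℝ))) else 1) =
      Fintype.card Λ := by
    intro v
    split_ifs
    · simp only [Finset.sum_add_distrib, ← Finset.mul_sum, Finset.sum_sub_distrib]
      simp
    · simp
  rw [Finset.prod_congr rfl (fun v _ => h3 v), Finset.prod_const, Finset.card_univ]

lemma exp_le_prod_dev (f : V → Λ) (l : Λ) (D : Finset V) {t : ℝ} (ht : |t| ≤ 1 / 2) :
    Real.exp (t * (((D.filter fun v => f v = l).card : ℝ) - D.card / Fintype.card Λ) -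
      2 * t ^ 2 * D.card) ≤ ∏ v ∈ D, (1 + t * dev f l v) := by
  have h1 : ∀ v, |t * dev f l v| ≤ |t| := fun v => by
    rw [abs_mul]
    exact mul_le_of_le_one_right (abs_nonneg _) (abs_dev_le f l v)
  have h2 : ∏ v ∈ D, Real.exp (t * dev f l v - 2 * t ^ 2) ≤ ∏ v ∈ D, (1 + t * dev f l v) := by
    refine Finset.prod_le_prod (fun v _ => (Real.exp_pos _).le) fun v _ => ?_
    refine le_trans (Real.exp_le_exp.2 ?_) (exp_sub_sq_le ((h1 v).trans ht))
    have := sq_le_sq.2 (h1 v)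
    linarith
  refine le_trans (le_of_eq ?_) h2
  rw [← Real.exp_sum, Finset.sum_sub_distrib, ← Finset.mul_sum, sum_dev, Finset.sum_const,
    nsmul_eq_mul]
  congr 1
  ring

lemma deviation_identity {N : ℝ} (hN : N ≠ 0) (ε d : ℝ) :
    ε * (d / N) * (ε / (4 * N)) - 2 * (ε / (4 * N)) ^ 2 * d = d * (ε ^ 2 / (8 * N ^ 2)) := by
  field_simp
  ring

lemma exists_labelling [Nonempty Λ] {ι : Type*} [Fintype ι] (D : ι → Finset V) {ε μ : ℝ}
    (hε : 0 < ε) (hε1 : ε ≤ 1) (hD : ∀ i, μ ≤ (D i).card)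
    (hμ : 2 * (Fintype.card ι : ℝ) * Fintype.card Λ <
      Real.exp (μ * (ε ^ 2 / (8 * (Fintype.card Λ : ℝ) ^ 2)))) :
    ∃ f : V → Λ, ∀ i l,
      (1 - ε) * ((D i).card / Fintype.card Λ) ≤ (((D i).filter fun v => f v = l).card : ℝ) ∧
      (((D i).filter fun v => f v = l).card : ℝ) ≤ (1 + ε) * ((D i).card / Fintype.card Λ) := by
  have hN1 : (1 : ℝ) ≤ Fintype.card Λ := by exact_mod_cast Fintype.card_pos
  have hN : (0 : ℝ) < Fintype.card Λ := by linarith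
  set N : ℝ := (Fintype.card Λ : ℝ) with hNd
  set t : ℝ := ε / (4 * N) with ht
  have ht0 : 0 < t := by positivity
  have ht2 : t ≤ 1 / 2 := by
    rw [ht, div_le_iff₀ (by positivity)]
    linarith
  have habs : ∀ s : Bool, |(if s then t else -t)| ≤ 1 / 2 := by
    intro s; cases s <;> simp [abs_of_pos ht0] <;> linarith
  have hpos : ∀ (s : Bool) (f : V → Λ) i l,
      0 ≤ ∏ v ∈ D i, (1 + (if s then t else -t) * dev f l v) := fun s f i l =>
    (Real.exp_pos _).le.trans (exp_le_prod_dev f l (D i) (habs s))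
  have hsum : ∑ f : V → Λ, ∑ q : ι × Λ × Bool,
      ∏ v ∈ D q.1, (1 + (if q.2.2 then t else -t) * dev f q.2.1 v) ≤
      ∑ _f : V → Λ, 2 * (Fintype.card ι : ℝ) * N := by
    rw [Finset.sum_comm]
    simp only [sum_prod_dev, Finset.sum_const, Finset.card_univ, nsmul_eq_mul,
      Fintype.card_prod, Fintype.card_bool, Fintype.card_fun]
    push_cast
    rw [← hNd]
    apply le_of_eq
    ring
  obtain ⟨f, -, hf⟩ := Finset.exists_le_of_sum_le univ_nonempty hsum
  refine ⟨f, fun i l => ?_⟩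
  have key : ∀ s : Bool, (if s then t else -t) *
      ((((D i).filter fun v => f v = l).card : ℝ) - (D i).card / N) ≤
      ε * ((D i).card / N) * t := by
    intro s
    by_contra! hlt
    have h1 := exp_le_prod_dev f l (D i) (habs s)
    have h2 : ∏ v ∈ D i, (1 + (if s then t else -t) * dev f l v) ≤ 2 * (Fintype.card ι : ℝ) * N :=
      (Finset.single_le_sum (f := fun q : ι × Λ × Bool =>
        ∏ v ∈ D q.1, (1 + (if q.2.2 then t else -t) * dev f q.2.1 v))
        (fun q _ => hpos q.2.2 f q.1 q.2.1) (mem_univ (i, l, s))).trans hf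
    have h3 : μ * (ε ^ 2 / (8 * N ^ 2)) ≤ (if s then t else -t) *
        ((((D i).filter fun v => f v = l).card : ℝ) - (D i).card / N) -
        2 * (if s then t else -t) ^ 2 * (D i).card := by
      have h4 : (if s then t else -t) ^ 2 = t ^ 2 := by
        split_ifs
        · rfl
        · exact neg_sq t
      rw [h4]
      have h5 : ε * ((D i).card / N) * t - 2 * t ^ 2 * (D i).card =
          (D i).card * (ε ^ 2 / (8 * N ^ 2)) := by
        rw [ht]; exact deviation_identity hN.ne' _ _
      have h6 : μ * (ε ^ 2 / (8 * N ^ 2)) ≤ (D i).card * (ε ^ 2 / (8 * N ^ 2)) :=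
        mul_le_mul_of_nonneg_right (hD i) (by positivity)
      linarith
    have h7 := Real.exp_le_exp.2 h3
    linarith
  have k1 := key true
  have k2 := key false
  simp only [if_true, Bool.false_eq_true, if_false] at k1 k2
  constructor <;> nlinarith

end Labelling

section Linking

variable {V Λ : Type*} [Fintype V]

/-- Every subset `X` of `P` has at least `|X| - d` neighbours in direction `s` inside `P'`. -/
def Link (G : V → V → Prop) (d : ℕ) (s : Bool) (P P' : Finset V) : Prop :=
  ∀ X ⊆ P, X.card ≤ (P'.filter fun y => ∃ v ∈ X, E G s v y).card + d

lemma Link.exists_injOn {G : V → V → Prop} {d : ℕ} {s : Bool} {P P' : Finset V}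
    (h : Link G d s P P') {X : Finset V} (hX : X ⊆ P) :
    ∃ X' ⊆ X, ∃ g : V → V, X.card ≤ X'.card + d ∧ Set.InjOn g X' ∧
      ∀ v ∈ X', g v ∈ P' ∧ E G s v (g v) := by
  let t : X → Finset (V ⊕ Fin d) := fun v => (P'.filter fun y => E G s v y).disjSum univ
  have hall : ∀ S : Finset X, S.card ≤ (S.biUnion t).card := by
    intro S
    rcases S.eq_empty_or_nonempty with rfl | ⟨v₀, hv₀⟩
    · simp
    have h1 := h (S.map (Function.Embedding.subtype _)) (fun v hv => by
      obtain ⟨w, -, rfl⟩ := Finset.mem_map.1 hv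
      exact hX w.2)
    rw [card_map] at h1
    refine h1.trans ?_
    have h2 : ((P'.filter fun y => ∃ v ∈ S.map (Function.Embedding.subtype _), E G s v y).disjSum
        (univ : Finset (Fin d))) ⊆ S.biUnion t := by
      intro y hy
      rw [mem_biUnion]
      rcases Finset.mem_disjSum.1 hy with ⟨z, hz, rfl⟩ | ⟨i, -, rfl⟩
      · obtain ⟨hy1, v, hv, hy2⟩ := Finset.mem_filter.1 hz
        obtain ⟨w, hw, rfl⟩ := Finset.mem_map.1 hv
        exact ⟨w, hw, Finset.inl_mem_disjSum.2 (Finset.mem_filter.2 ⟨hy1, hy2⟩)⟩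
      · exact ⟨v₀, hv₀, Finset.inr_mem_disjSum.2 (mem_univ _)⟩
    refine le_trans (le_of_eq ?_) (card_le_card h2)
    rw [card_disjSum, card_univ, Fintype.card_fin]
  obtain ⟨f, hf, hft⟩ := (Finset.all_card_le_biUnion_card_iff_exists_injective t).1 hall
  let F : V → V ⊕ Fin d := fun v => if hv : v ∈ X then f ⟨v, hv⟩ else Sum.inl v
  have hF : ∀ v (hv : v ∈ X), F v = f ⟨v, hv⟩ := fun v hv => dif_pos hv
  have hFi : Set.InjOn F X := by
    intro v hv w hw hvw
    rw [hF v hv, hF w hw] at hvw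
    exact congrArg Subtype.val (hf hvw)
  refine ⟨X.filter fun v => (F v).isLeft, filter_subset _ _,
    fun v => (F v).elim id fun _ => v, ?_, ?_, ?_⟩
  · rw [← Finset.card_filter_add_card_filter_not (s := X) (fun v => ((F v).isLeft : Prop))]
    refine Nat.add_le_add_left ?_ _
    have h3 : ((X.filter fun v => ¬ ((F v).isLeft : Prop)).image F) ⊆
        (univ : Finset (Fin d)).map Function.Embedding.inr := by
      intro y hy
      obtain ⟨v, hv, rfl⟩ := Finset.mem_image.1 hy
      have hv2 := (Finset.mem_filter.1 hv).2
      cases hFv : F v with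
      | inl w => simp [hFv] at hv2
      | inr i => simp
    have h4 := card_le_card h3
    rw [card_map, card_univ, Fintype.card_fin, card_image_of_injOn] at h4
    · exact h4
    · exact hFi.mono (by intro v hv; exact (Finset.mem_filter.1 hv).1)
  · intro v hv w hw hvw
    have hv' := Finset.mem_filter.1 (Finset.mem_coe.1 hv)
    have hw' := Finset.mem_filter.1 (Finset.mem_coe.1 hw)
    apply hFi hv'.1 hw'.1
    obtain ⟨a, ha⟩ := Sum.isLeft_iff.1 hv'.2
    obtain ⟨b, hb⟩ := Sum.isLeft_iff.1 hw'.2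
    simp only [ha, hb, Sum.elim_inl, id] at hvw ⊢
    rw [hvw]
  · intro v hv
    obtain ⟨hvX, hvl⟩ := Finset.mem_filter.1 hv
    obtain ⟨a, ha⟩ := Sum.isLeft_iff.1 hvl
    have h5 : ∀ z, F v = z → z ∈ t ⟨v, hvX⟩ := by
      rintro z rfl
      rw [hF v hvX]
      exact hft _
    simp only [ha, Sum.elim_inl, id]
    exact Finset.mem_filter.1 (Finset.inl_mem_disjSum.1 (h5 _ ha))

lemma exists_walks_of_link {G : V → V → Prop} {d : ℕ} (P : Λ → Finset V)
    (h : ∀ s a b, Link G d s (P a) (P b)) (L : List (Bool × Λ)) :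
    ∀ a, ∀ X ⊆ P a, ∃ X' ⊆ X, X.card ≤ X'.card + L.length * d ∧ ∃ (q : V → V)
      (M : V → Multiset V), (∀ x ∈ X', Wk G (L.map Prod.fst) x (q x) (M x)) ∧
      ∑ x ∈ X', M x ≤ (L.map fun l => (P l.2).val).sum := by
  induction L with
  | nil =>
    intro a X _
    exact ⟨X, subset_rfl, by simp, id, fun _ => 0, fun x _ => Wk.nil x, by simp⟩
  | cons l L ih =>
    obtain ⟨s, b⟩ := l
    intro a X hX
    obtain ⟨X₁, hX₁, g, hc, hg, hgE⟩ := (h s a b).exists_injOn hX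
    obtain ⟨Y, hY, hYc, q, M, hW, hM⟩ := ih b (X₁.image g) (fun y hy => by
      obtain ⟨v, hv, rfl⟩ := Finset.mem_image.1 hy
      exact (hgE v hv).1)
    have himg : (X₁.filter fun v => g v ∈ Y).image g = Y := by
      ext y
      simp only [Finset.mem_image, Finset.mem_filter]
      constructor
      · rintro ⟨v, ⟨_, hv⟩, rfl⟩; exact hv
      · intro hy
        obtain ⟨v, hv, rfl⟩ := Finset.mem_image.1 (hY hy)
        exact ⟨v, ⟨hv, hy⟩, rfl⟩
    have hinj : Set.InjOn g (X₁.filter fun v => g v ∈ Y) :=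
      hg.mono fun v hv => (Finset.mem_filter.1 (Finset.mem_coe.1 hv)).1
    refine ⟨X₁.filter fun v => g v ∈ Y, (filter_subset _ _).trans hX₁, ?_, fun v => q (g v),
      fun v => g v ::ₘ M (g v), ?_, ?_⟩
    · have h1 := card_image_of_injOn hinj
      rw [himg] at h1
      rw [card_image_of_injOn hg] at hYc
      rw [← h1, List.length_cons, add_mul]
      omega
    · intro x hx
      have hx' := Finset.mem_filter.1 hx
      exact Wk.cons (hgE x hx'.1).2 (hW _ hx'.2)
    · have h2 : ∑ x ∈ X₁.filter (fun v => g v ∈ Y), (g x ::ₘ M (g x)) = ∑ y ∈ Y, (y ::ₘ M y) := by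
        conv_rhs => rw [← himg]
        rw [Finset.sum_image hinj]
      rw [h2, List.map_cons, List.sum_cons]
      simp only [← Multiset.singleton_add]
      rw [Finset.sum_add_distrib, Finset.sum_multiset_singleton]
      refine add_le_add ?_ hM
      refine Finset.val_le_iff.2 fun y hy => ?_
      obtain ⟨v, hv, rfl⟩ := Finset.mem_image.1 (hY hy)
      exact (hgE v hv).1

end Linking

section Grouping

lemma exists_grouping {T : Type*} [Fintype T] [Nonempty T] {m g k : ℕ} (hg : 0 < g)
    (h : m + g * Fintype.card T ≤ g * k) (β : Fin m → T) :
    ∃ (φ : Fin m → Fin k × Fin g) (ω : Fin k → T), Function.Injective φ ∧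
      ∀ j, β j = ω (φ j).1 := by
  let c : T → ℕ := fun t => Fintype.card {j // β j = t}
  have hsum : ∑ t, c t = m := by
    rw [← Fintype.card_sigma, Fintype.card_congr (Equiv.sigmaFiberEquiv β), Fintype.card_fin]
  have hcard : Fintype.card (Σ t, Fin (c t / g + 1)) ≤ Fintype.card (Fin k) := by
    rw [Fintype.card_sigma, Fintype.card_fin]
    simp only [Fintype.card_fin]
    refine Nat.le_of_mul_le_mul_left (le_trans ?_ h) hg
    rw [Finset.sum_add_distrib, mul_add, Finset.mul_sum]
    refine add_le_add ?_ (by simp)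
    rw [← hsum]
    exact Finset.sum_le_sum fun t _ => Nat.mul_div_le _ _
  obtain ⟨e⟩ := Function.Embedding.nonempty_of_card_le hcard
  let ix : Fin m → ℕ := fun j => (Fintype.equivFin {i // β i = β j} ⟨j, rfl⟩ : ℕ)
  have hix : ∀ j, ix j < c (β j) := fun j => (Fintype.equivFin {i // β i = β j} ⟨j, rfl⟩).2
  have hixi : ∀ i j, β i = β j → ix i = ix j → i = j := by
    intro i j hij h'
    have : ∀ t i (hi : β i = t), ix i = (Fintype.equivFin {l // β l = t} ⟨i, hi⟩ : ℕ) := by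
      rintro t i rfl
      rfl
    rw [this _ i hij] at h'
    exact congrArg Subtype.val ((Fintype.equivFin _).injective (Fin.ext h'))
  let b : ∀ j, Σ t, Fin (c t / g + 1) := fun j =>
    ⟨β j, ⟨ix j / g, Nat.lt_succ_of_le (Nat.div_le_div_right (hix j).le)⟩⟩
  have : Nonempty (Σ t, Fin (c t / g + 1)) := ⟨⟨Classical.arbitrary T, 0⟩⟩
  refine ⟨fun j => (e (b j), ⟨ix j % g, Nat.mod_lt _ hg⟩), fun i => (Function.invFun e i).1,
    ?_, fun j => ?_⟩
  · intro i j hij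
    simp only [Prod.mk.injEq, Fin.mk.injEq] at hij
    have h1 := e.injective hij.1
    have h2 : β i = β j := congrArg Sigma.fst h1
    have h3 : ix i / g = ix j / g := congrArg (fun x : Σ t, Fin (c t / g + 1) => (x.2 : ℕ)) h1
    exact hixi i j h2 (by rw [← Nat.div_add_mod (ix i) g, ← Nat.div_add_mod (ix j) g, h3, hij.2])
  · show β j = (Function.invFun e (e (b j))).1
    rw [Function.leftInverse_invFun e.injective]

end Grouping

section NearCover

variable {V : Type*} [Fintype V]

lemma sum_fibres {Λ : Type*} [Fintype Λ] (f : V → Λ) :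
    ∑ l, (univ.filter fun v => f v = l).val = (univ : Finset V).val := by
  have h := Finset.sum_fiberwise (univ : Finset V) f (fun v => ({v} : Multiset V))
  simpa only [Finset.sum_multiset_singleton] using h

lemma near_cover_of_link {G : V → V → Prop} {d B k g m : ℕ} (f : V → Fin k × Fin (B + 1))
    (h : ∀ s a b, Link G d s (univ.filter fun v => f v = a) (univ.filter fun v => f v = b))
    (hg : 0 < g) (hf : ∀ i, g + B * d ≤ (univ.filter fun v => f v = (i, 0)).card)
    (hm : m + g * 2 ^ B ≤ g * k) (β : Fin m → List Bool) (hβ : ∀ j, (β j).length = B) :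
    ∃ (p q : Fin m → V) (M : Fin m → Multiset V), (∀ j, Wk G (β j) (p j) (q j) (M j)) ∧
      ∑ j, (p j ::ₘ M j) ≤ (univ : Finset V).val := by
  obtain ⟨φ, ω, hφ, hω⟩ := exists_grouping (T := Fin B → Bool) (k := k) hg (by simpa using hm)
    (fun j i => (β j).get (i.cast (hβ j).symm))
  have hβω : ∀ j, β j = List.ofFn (ω (φ j).1) := by
    intro j
    rw [← hω j]
    apply List.ext_get
    · simp [hβ]
    · intro n h1 h2
      simp
  let L : Fin k → List (Bool × (Fin k × Fin (B + 1))) := fun i =>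
    List.ofFn fun t : Fin B => (ω i t, (i, t.succ))
  have hL : ∀ i, (L i).length = B := fun i => by simp [L]
  choose X hX hXc q M hW hM using fun i => exists_walks_of_link
    (fun a => univ.filter fun v => f v = a) h (L i) (i, 0) _ subset_rfl
  have hXg : ∀ i, g ≤ (X i).card := fun i => by
    have h1 := hXc i
    have h2 := hf i
    rw [hL] at h1
    omega
  let x : Fin k × Fin g → V := fun a =>
    ((X a.1).equivFin.symm (Fin.castLE (hXg a.1) a.2) : V)
  have hx : ∀ a, x a ∈ X a.1 := fun a => ((X a.1).equivFin.symm _).2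
  have hxi : ∀ i, Function.Injective fun t => x (i, t) := by
    intro i s t hst
    exact Fin.castLE_injective _ ((X i).equivFin.symm.injective (Subtype.ext hst))
  refine ⟨fun j => x (φ j), fun j => q (φ j).1 (x (φ j)), fun j => M (φ j).1 (x (φ j)),
    fun j => ?_, ?_⟩
  · have h1 := hW (φ j).1 _ (hx (φ j))
    refine h1.congr ?_ rfl
    rw [hβω]
    simp [L, List.map_ofFn, Function.comp_def]
  · calc ∑ j, (x (φ j) ::ₘ M (φ j).1 (x (φ j)))
        = ∑ a ∈ univ.image φ, (x a ::ₘ M a.1 (x a)) :=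
          (Finset.sum_image (f := fun a => x a ::ₘ M a.1 (x a)) hφ.injOn).symm
      _ ≤ ∑ a : Fin k × Fin g, (x a ::ₘ M a.1 (x a)) :=
          Finset.sum_le_sum_of_subset (subset_univ _)
      _ = ∑ i : Fin k, ∑ t : Fin g, (x (i, t) ::ₘ M i (x (i, t))) := Fintype.sum_prod_type _
      _ = ∑ i : Fin k, ∑ v ∈ univ.image fun t => x (i, t), (v ::ₘ M i v) := by
          refine Finset.sum_congr rfl fun i _ => ?_
          rw [Finset.sum_image (hxi i).injOn]
      _ ≤ ∑ i : Fin k, ∑ v ∈ X i, (v ::ₘ M i v) := by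
          refine Finset.sum_le_sum fun i _ => Finset.sum_le_sum_of_subset fun v hv => ?_
          obtain ⟨t, -, rfl⟩ := Finset.mem_image.1 hv
          exact hx (i, t)
      _ ≤ ∑ i : Fin k, ∑ t : Fin (B + 1), (univ.filter fun v => f v = (i, t)).val := by
          refine Finset.sum_le_sum fun i _ => ?_
          simp only [← Multiset.singleton_add]
          rw [Finset.sum_add_distrib, Finset.sum_multiset_singleton, Fin.sum_univ_succ]
          refine add_le_add (Finset.val_le_iff.2 (hX i)) ((hM i).trans (le_of_eq ?_))
          simp [L, List.map_ofFn, Function.comp_def, List.sum_ofFn]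
      _ = (univ : Finset V).val := by
          rw [← sum_fibres f, Fintype.sum_prod_type]
          exact Finset.sum_congr rfl fun i _ => Finset.sum_congr rfl fun t _ => by congr!

lemma link_of_counts {Λ : Type*} {G : V → V → Prop} {r d : ℕ} {u w : ℝ} {s : Bool}
    (ρ : Fin r → Equiv.Perm V) (hρ : ∀ j v, E G s v (ρ j v)) (f : V → Λ) (a b : Λ)
    (h₁ : ∀ v, u ≤ ((univ.filter fun j => f (ρ j v) = b).card : ℝ))
    (h₂ : ∀ y, ((univ.filter fun j => f ((ρ j).symm y) = a).card : ℝ) ≤ w)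
    (hu : 0 < u) (hd : ((univ.filter fun v => f v = b).card : ℝ) * (w - u) ≤ d * u) :
    Link G d s (univ.filter fun v => f v = a) (univ.filter fun v => f v = b) := by
  intro X hX
  set Y := (univ.filter fun v => f v = b).filter fun y => ∃ v ∈ X, E G s v y with hY
  have hcount : ∑ v ∈ X, (univ.filter fun j => f (ρ j v) = b).card ≤
      ∑ y ∈ Y, (univ.filter fun j => f ((ρ j).symm y) = a).card := by
    rw [← Finset.card_sigma, ← Finset.card_sigma]
    refine Finset.card_le_card_of_injOn (fun z => ⟨ρ z.2 z.1, z.2⟩) ?_ ?_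
    · rintro ⟨v, j⟩ hz
      simp only [Finset.coe_sigma, Set.mem_sigma_iff, Finset.mem_coe, Finset.mem_filter,
        Finset.mem_univ, true_and] at hz
      have := (Finset.mem_filter.1 (hX hz.1)).2
      simp only [Finset.coe_sigma, Set.mem_sigma_iff, Finset.mem_coe, Finset.mem_filter,
        Finset.mem_univ, true_and, Equiv.symm_apply_apply, hY]
      exact ⟨⟨hz.2, v, hz.1, hρ j v⟩, this⟩
    · rintro ⟨v, j⟩ _ ⟨v', j'⟩ _ hzz
      simp only [Sigma.mk.injEq, heq_eq_eq] at hzz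
      obtain ⟨h1, rfl⟩ := hzz
      rw [(ρ j).injective h1]
  have h3 : (X.card : ℝ) * u ≤ Y.card * w := by
    calc (X.card : ℝ) * u = ∑ v ∈ X, u := by simp
      _ ≤ ∑ v ∈ X, ((univ.filter fun j => f (ρ j v) = b).card : ℝ) :=
          Finset.sum_le_sum fun v _ => h₁ v
      _ ≤ ∑ y ∈ Y, ((univ.filter fun j => f ((ρ j).symm y) = a).card : ℝ) := by
          exact_mod_cast hcount
      _ ≤ ∑ y ∈ Y, w := Finset.sum_le_sum fun y _ => h₂ y
      _ = Y.card * w := by simp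
  have h4 : (Y.card : ℝ) ≤ ((univ.filter fun v => f v = b).card : ℝ) := by
    exact_mod_cast card_le_card (filter_subset _ _)
  have h5 : (X.card : ℝ) ≤ Y.card + d := by
    by_contra! hlt
    rcases le_total u w with h | h
    · nlinarith
    · have h0 : (0 : ℝ) ≤ Y.card := Nat.cast_nonneg _
      have h0' : (0 : ℝ) ≤ d := Nat.cast_nonneg _
      nlinarith
  exact_mod_cast h5

lemma eventually_mul_pow_lt_exp (A : ℝ) {c : ℝ} (hc : 0 < c) (k : ℕ) :
    ∀ᶠ n : ℕ in Filter.atTop, A * (n : ℝ) ^ k < Real.exp (c * n) := by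
  have h := (isLittleO_pow_exp_pos_mul_atTop k hc).comp_tendsto tendsto_natCast_atTop_atTop
  have h1 := h.def (show (0 : ℝ) < 1 / (2 * (|A| + 1)) by positivity)
  filter_upwards [h1] with n hn
  simp only [Function.comp_apply, norm_pow, Real.norm_eq_abs,
    Real.abs_exp, Nat.abs_cast] at hn
  have hA : 0 < |A| + 1 := by positivity
  have h2 : (|A| + 1) * (n : ℝ) ^ k ≤ Real.exp (c * n) / 2 := by
    calc (|A| + 1) * (n : ℝ) ^ k ≤ (|A| + 1) * (1 / (2 * (|A| + 1)) * Real.exp (c * n)) := by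
          gcongr
      _ = Real.exp (c * n) / 2 := by field_simp
  have h3 : A * (n : ℝ) ^ k ≤ (|A| + 1) * (n : ℝ) ^ k := by
    gcongr
    linarith [le_abs_self A]
  linarith [Real.exp_pos (c * n)]

lemma eventually_le_mul_natCast (A : ℝ) {c : ℝ} (hc : 0 < c) :
    ∀ᶠ n : ℕ in Filter.atTop, A ≤ c * n :=
  (tendsto_natCast_atTop_atTop.const_mul_atTop hc).eventually_ge_atTop A

lemma Expander.exists_labelling {G : V → V → Prop} {ν ε : ℝ} (hG : Expander G ν) (hε : 0 < ε)
    (hε1 : ε ≤ 1) {Λ : Type*} [Fintype Λ] [Nonempty Λ]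
    (hn : 2 ≤ ν * Fintype.card V)
    (hexp : 6 * Fintype.card Λ * Fintype.card V <
      Real.exp (ε ^ 2 / (8 * (Fintype.card Λ : ℝ) ^ 2) * ν / 2 * Fintype.card V)) :
    ∃ (f : V → Λ) (r : ℕ) (π : Fin r → Equiv.Perm V), 0 < r ∧ (∀ j v, G v (π j v)) ∧
      (∀ a, (1 - ε) * (Fintype.card V / Fintype.card Λ) ≤
        ((univ.filter fun v => f v = a).card : ℝ) ∧
        ((univ.filter fun v => f v = a).card : ℝ) ≤
        (1 + ε) * (Fintype.card V / Fintype.card Λ)) ∧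
      (∀ v a, (1 - ε) * (r / Fintype.card Λ) ≤
        ((univ.filter fun j => f (π j v) = a).card : ℝ) ∧
        ((univ.filter fun j => f (π j v) = a).card : ℝ) ≤ (1 + ε) * (r / Fintype.card Λ)) ∧
      (∀ v a, (1 - ε) * (r / Fintype.card Λ) ≤
        ((univ.filter fun j => f ((π j).symm v) = a).card : ℝ) ∧
        ((univ.filter fun j => f ((π j).symm v) = a).card : ℝ) ≤
        (1 + ε) * (r / Fintype.card Λ)) := by
  have hν := hG.pos
  have hn0 : (0 : ℝ) ≤ Fintype.card V := Nat.cast_nonneg _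
  have hn1 : (1 : ℝ) ≤ Fintype.card V := by exact_mod_cast hG.card_pos
  obtain ⟨r, hr1, hr2⟩ : ∃ r : ℕ, (r : ℝ) ≤ ν * Fintype.card V ∧ ν * Fintype.card V < r + 1 :=
    ⟨_, Nat.floor_le (by positivity), Nat.lt_floor_add_one _⟩
  obtain ⟨π, hπ, hπi⟩ := exists_permutations hG r hr1
  have hπs : ∀ v, Function.Injective fun j => (π j).symm v := by
    intro v i j hij
    simp only at hij
    apply hπi ((π i).symm v)
    simp only [Equiv.apply_symm_apply]
    rw [hij, Equiv.apply_symm_apply]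
  let D : (V × Bool) ⊕ Unit → Finset V := fun i => i.elim
    (fun q => if q.2 then univ.image (fun j => π j q.1) else univ.image (fun j => (π j).symm q.1))
    fun _ => univ
  have hDt : ∀ v, (D (Sum.inl (v, true))).card = r := fun v => by
    simp only [D, Sum.elim_inl, if_true]
    rw [card_image_of_injective _ (hπi v), card_univ, Fintype.card_fin]
  have hDf : ∀ v, (D (Sum.inl (v, false))).card = r := fun v => by
    simp only [D, Sum.elim_inl, Bool.false_eq_true, if_false]
    rw [card_image_of_injective _ (hπs v), card_univ, Fintype.card_fin]
  obtain ⟨f, hf⟩ := OrientedHam.exists_labelling (Λ := Λ) (μ := r) D hε hε1 (by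
    rintro (⟨v, s⟩ | -)
    · cases s
      · rw [hDf]
      · rw [hDt]
    · refine hr1.trans ?_
      simp only [D, Sum.elim_inr, card_univ]
      nlinarith [hG.small]) (by
    have hc : Fintype.card ((V × Bool) ⊕ Unit) = 2 * Fintype.card V + 1 := by
      simp [mul_comm]
    rw [hc]
    push_cast
    refine lt_of_le_of_lt ?_ (hexp.trans_le (Real.exp_le_exp.2 ?_))
    · have hΛ : (0 : ℝ) ≤ Fintype.card Λ := Nat.cast_nonneg _
      nlinarith
    · rw [mul_div_assoc, mul_assoc, mul_comm]
      exact mul_le_mul_of_nonneg_right (by linarith) (by positivity))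
  refine ⟨f, r, π, ?_, hπ, fun a => by simpa [D] using hf (Sum.inr ()) a, fun v a => ?_,
    fun v a => ?_⟩
  · have : (0 : ℝ) < r := by linarith
    exact_mod_cast this
  · have h := hf (Sum.inl (v, true)) a
    rw [hDt] at h
    simp only [D, Sum.elim_inl, if_true] at h
    rwa [Finset.filter_image, card_image_of_injective _ (hπi v)] at h
  · have h := hf (Sum.inl (v, false)) a
    rw [hDf] at h
    simp only [D, Sum.elim_inl, Bool.false_eq_true, if_false] at h
    rwa [Finset.filter_image, card_image_of_injective _ (hπs v)] at h

end NearCover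

lemma defect_bound {ε x P d r N : ℝ} (hε : 0 < ε) (hε1 : ε ≤ 1 / 2) (hx : 0 ≤ x)
    (hP : P ≤ (1 + ε) * x) (hd : 6 * ε * x ≤ d) (hr : 0 ≤ r / N) :
    P * ((1 + ε) * (r / N) - (1 - ε) * (r / N)) ≤ d * ((1 - ε) * (r / N)) := by
  have h1 : P * (2 * ε) ≤ d * (1 - ε) := by
    have h2 : P * (2 * ε) ≤ (1 + ε) * x * (2 * ε) := mul_le_mul_of_nonneg_right hP (by linarith)
    have h3 : 6 * ε * x * (1 - ε) ≤ d * (1 - ε) := mul_le_mul_of_nonneg_right hd (by linarith)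
    have h4 : 0 ≤ ε * x := by positivity
    nlinarith
  nlinarith [mul_le_mul_of_nonneg_right h1 hr]

lemma floor_bound {η δ x g : ℝ} (hη : δ = η / 2) (hδ : 0 < δ) (hδ1 : δ ≤ 1)
    (hx : 1 ≤ x * δ ^ 2) (hg : (1 - δ) * x < g + 1) : (1 - η) * x ≤ (1 - δ) * g := by
  have h1 : (1 - δ) * ((1 - δ) * x - 1) ≤ (1 - δ) * g :=
    mul_le_mul_of_nonneg_left (by linarith) (by linarith)
  have h2 : η = 2 * δ := by linarith
  subst h2
  linarith

lemma exists_near_cover (B : ℕ) {η ν : ℝ} (hη : 0 < η) (hη1 : η ≤ 1) (hν : 0 < ν) :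
    ∃ n₀ : ℕ, ∀ (V : Type) [Fintype V] (G : V → V → Prop), Expander G ν →
      n₀ ≤ Fintype.card V → ∀ (m : ℕ) (β : Fin m → List Bool), (∀ j, (β j).length = B) →
      (m : ℝ) * (B + 1) ≤ (1 - η) * Fintype.card V →
      ∃ (p q : Fin m → V) (M : Fin m → Multiset V), (∀ j, Wk G (β j) (p j) (q j) (M j)) ∧
        ∑ j, (p j ::ₘ M j) ≤ (univ : Finset V).val := by
  set δ : ℝ := η / 2 with hδd
  have hδ : 0 < δ := by positivity
  set ε : ℝ := δ / (2 * (6 * B + 1)) with hεd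
  have hB0 : (0 : ℝ) ≤ B := Nat.cast_nonneg _
  have hε : 0 < ε := by positivity
  have hεB : 2 * (6 * B + 1) * ε = δ := by
    rw [hεd]; field_simp
  have hε1 : ε ≤ 1 / 2 := by nlinarith
  obtain ⟨k, hk⟩ := exists_nat_ge ((2 : ℝ) ^ B / δ)
  rw [div_le_iff₀ hδ] at hk
  have hk0 : 0 < k := by
    rcases Nat.eq_zero_or_pos k with rfl | h
    · have : (0 : ℝ) < 2 ^ B := by positivity
      simp at hk
      linarith
    · exact h
  have hk0' : (0 : ℝ) < k := by exact_mod_cast hk0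
  set N : ℝ := (k : ℝ) * (B + 1) with hN
  have hN0 : 0 < N := by positivity
  have hcard : (Fintype.card (Fin k × Fin (B + 1)) : ℝ) = N := by
    rw [hN]; simp
  have ev := ((eventually_le_mul_natCast 2 hν).and
    ((eventually_mul_pow_lt_exp (6 * N)
      (show 0 < ε ^ 2 / (8 * N ^ 2) * ν / 2 by positivity) 1).and
    ((eventually_le_mul_natCast (2 * B / δ) (show 0 < 1 / N by positivity)).and
    ((eventually_le_mul_natCast (1 / δ ^ 2) (show 0 < 1 / N by positivity)).and
    (eventually_le_mul_natCast 2 (show 0 < 1 / N by positivity))))))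
  obtain ⟨n₀, hn₀⟩ := Filter.eventually_atTop.1 ev
  refine ⟨n₀, fun V _ G hG hn m β hβ hm => ?_⟩
  obtain ⟨e1, e2, e3, e4, e5⟩ := hn₀ _ hn
  set x : ℝ := (Fintype.card V : ℝ) / N with hx
  have hx' : 1 / N * (Fintype.card V : ℝ) = x := by rw [hx]; ring
  have hnx : (Fintype.card V : ℝ) = x * N := by rw [hx]; field_simp
  rw [hx'] at e3 e4 e5
  rw [div_le_iff₀ hδ] at e3
  rw [div_le_iff₀ (by positivity)] at e4
  have : Nonempty (Fin k × Fin (B + 1)) := ⟨(⟨0, hk0⟩, 0)⟩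
  obtain ⟨f, r, π, hr, hπ, hfa, hf1, hf2⟩ := hG.exists_labelling (Λ := Fin k × Fin (B + 1)) hε
    (by linarith) e1 (by rw [hcard]; simpa using e2)
  rw [hcard] at hfa hf1 hf2
  rw [← hx] at hfa
  have hr0 : (0 : ℝ) < r / N := div_pos (by exact_mod_cast hr) hN0
  have hu : 0 < (1 - ε) * (r / N) := mul_pos (by linarith) hr0
  set d := ⌈6 * ε * x⌉₊ with hd
  have hd1 : 6 * ε * x ≤ d := Nat.le_ceil _
  have hd2 : (d : ℝ) < 6 * ε * x + 1 := Nat.ceil_lt_add_one (by positivity)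
  have hg0 : 1 ≤ (1 - δ) * x := by nlinarith
  set g := ⌊(1 - δ) * x⌋₊ with hg
  have hg1 : (g : ℝ) ≤ (1 - δ) * x := Nat.floor_le (by linarith)
  have hg2 : (1 - δ) * x < g + 1 := Nat.lt_floor_add_one _
  refine near_cover_of_link (d := d) (g := g) f ?_ ?_ ?_ ?_ β hβ
  · intro s a b
    cases s
    · convert link_of_counts (d := d) (s := false) (fun j => (π j).symm) (fun j v => ?_) f a b
        (fun v => (hf2 v b).1) (fun y => (hf1 y a).2) hu ?_
      · rw [E_false]
        have := hπ j ((π j).symm v)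
        rwa [Equiv.apply_symm_apply] at this
      · exact defect_bound hε hε1 (by linarith) (hfa b).2 hd1 hr0.le
    · convert link_of_counts (d := d) π (fun j v => E_true.2 (hπ j v)) f a b
        (fun v => (hf1 v b).1) (fun y => (hf2 y a).2) hu ?_
      exact defect_bound hε hε1 (by linarith) (hfa b).2 hd1 hr0.le
  · exact Nat.floor_pos.2 hg0
  · intro i
    have h1 := (hfa (i, 0)).1
    have h2 : (g : ℝ) + B * d ≤ (1 - ε) * x := by
      have h3 : (B : ℝ) * d ≤ B * (6 * ε * x + 1) := mul_le_mul_of_nonneg_left hd2.le hB0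
      have h4 : δ * x = 2 * (6 * B + 1) * ε * x := by rw [hεB]
      nlinarith
    have h5 : ((g + B * d : ℕ) : ℝ) ≤ (1 - ε) * x := by
      push_cast
      exact h2
    have h6 := (Nat.cast_le (α := ℝ)).1 (h5.trans h1)
    convert h6
  · have h1 : (m : ℝ) ≤ (1 - η) * (x * k) := by
      have : (m : ℝ) * (B + 1) ≤ (1 - η) * (x * k) * (B + 1) := by
        rw [hnx, hN] at hm
        linarith
      exact le_of_mul_le_mul_right this (by positivity)
    have h2 : (1 - η) * x ≤ (1 - δ) * g :=
      floor_bound hδd hδ (by linarith) e4 hg2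
    have h4 : (m : ℝ) + g * 2 ^ B ≤ g * k := by
      have h5 : (g : ℝ) * 2 ^ B ≤ g * (k * δ) :=
        mul_le_mul_of_nonneg_left hk (Nat.cast_nonneg _)
      have h6 := mul_le_mul_of_nonneg_right h2 hk0'.le
      linarith
    exact_mod_cast h4

lemma exists_T_eq {V : Type*} [Fintype V] {G : V → V → Prop} {ν : ℝ} (hG : Expander G ν) {l : ℕ}
    (hl : 1 ≤ l * ν) (p : V) (σ : List Bool) :
    ∃ w : (Fin l → Bool) × Fin (l + 1), T G ν p σ = T G ν p ((List.ofFn w.1).take w.2) := by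
  rcases le_or_gt σ.length l with h | h
  · refine ⟨(fun i => σ.getD i true, ⟨σ.length, Nat.lt_succ_of_le h⟩), ?_⟩
    congr 1
    apply List.ext_getElem
    · simp [h]
    · intro n h1 h2
      simp [h1]
  · refine ⟨(fun _ => true, ⟨l, Nat.lt_succ_self l⟩), ?_⟩
    rw [T_eq_univ hG, T_eq_univ hG]
    · simpa using hl
    · refine hl.trans (mul_le_mul_of_nonneg_right ?_ hG.pos.le)
      exact_mod_cast h.le

lemma exp_decay {A x δ : ℝ} {N h : ℕ} (hδ1 : δ ≤ 1)
    (hx : A ≤ Real.exp x) (hN : x ≤ δ * N - h) :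
    A * (1 - δ) ^ N ≤ (1 / 2) ^ h := by
  have h1 : (1 - δ) ^ N ≤ Real.exp (-(δ * N)) := by
    rw [show -(δ * (N : ℝ)) = N * (-δ) by ring, Real.exp_nat_mul]
    refine pow_le_pow_left₀ (by linarith) ?_ N
    have := Real.add_one_le_exp (-δ)
    linarith
  have h2 : Real.exp (-(h : ℝ)) ≤ (1 / 2) ^ h := by
    rw [show -(h : ℝ) = h * (-1) by ring, Real.exp_nat_mul]
    refine pow_le_pow_left₀ (Real.exp_pos _).le ?_ h
    rw [Real.exp_neg, one_div]
    apply inv_anti₀ (by norm_num)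
    have := Real.add_one_le_exp (1 : ℝ)
    linarith
  refine le_trans ?_ h2
  calc A * (1 - δ) ^ N ≤ Real.exp x * Real.exp (-(δ * N)) :=
        mul_le_mul hx h1 (pow_nonneg (by linarith) _) (Real.exp_pos _).le
    _ = Real.exp (x + -(δ * N)) := (Real.exp_add _ _).symm
    _ ≤ Real.exp (-(h : ℝ)) := Real.exp_le_exp.2 (by linarith)

lemma exists_absorbing {ν γ : ℝ} {l : ℕ} (hν : 0 < ν) (hl : 1 ≤ l * ν) (hγ : 0 < γ)
    (hγK : γ * (3 * (2 * l + 2 * (4 * l + 6)) : ℕ) ≤ ν ^ 3 / 12) :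
    ∃ c : ℝ, 0 < c ∧ ∃ n₀ : ℕ, ∀ (V : Type) [Fintype V] (G : V → V → Prop), Expander G ν →
      n₀ ≤ Fintype.card V → ∀ N h : ℕ, (N : ℝ) ≤ γ * Fintype.card V →
      γ * Fintype.card V ≤ N + 1 → (h : ℝ) ≤ c * Fintype.card V → ∀ Q : ℕ → List Bool,
      (∀ i < N, (Q i).length = 3 * (2 * l + 2 * (4 * l + 6))) →
      ∃ A : Absorbers G ν N h, A.Q = Q ∧
        ({A.e 0} + ∑ i ∈ range N, (A.y i ::ₘ A.M i)).Nodup := by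
  set K := 3 * (2 * l + 2 * (4 * l + 6)) with hK
  obtain ⟨k, hk⟩ : ∃ k, K = k + 2 := ⟨K - 2, by omega⟩
  set δ : ℝ := (ν ^ 3 / 3 / 2) ^ (k + 2) / 2 with hδd
  have hδ : 0 < δ := by positivity
  refine ⟨δ * γ / 4, by positivity, ?_⟩
  set R : ℝ := (Fintype.card (Bool × (Fin l → Bool) × Fin (l + 1)) : ℝ) with hR
  have ev := ((eventually_le_mul_natCast 1 (show 0 < ν ^ 3 / 12 by positivity)).and
    ((eventually_le_mul_natCast 2 hγ).and
    (eventually_mul_pow_lt_exp R (show 0 < δ * γ / 4 by positivity) 3)))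
  obtain ⟨n₀, hn₀⟩ := Filter.eventually_atTop.1 ev
  refine ⟨n₀, fun V _ G hG hn N h hN1 hN2 hh Q hQ => ?_⟩
  obtain ⟨e1, e2, e3⟩ := hn₀ _ hn
  have hc := cube_third_le hG
  have hn0 : (0 : ℝ) ≤ Fintype.card V := Nat.cast_nonneg _
  have : Nonempty V := Fintype.card_pos_iff.1 hG.card_pos
  let U : V × V × V × Bool × (Fin l → Bool) × Fin (l + 1) → Finset V := fun q =>
    nb G q.2.2.2.1 q.2.1 ∩ T G ν q.2.2.1 ((List.ofFn q.2.2.2.2.1).take q.2.2.2.2.2)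
  let ι := {q // ν ^ 3 / 3 * (Fintype.card V : ℝ) ≤ ((U q).card : ℝ)}
  have hι : (Fintype.card ι : ℝ) ≤ R * (Fintype.card V : ℝ) ^ 3 := by
    have h1 : Fintype.card ι ≤
        Fintype.card (V × V × V × Bool × (Fin l → Bool) × Fin (l + 1)) :=
      Fintype.card_subtype_le _
    rw [Fintype.card_prod, Fintype.card_prod, Fintype.card_prod] at h1
    have h2 : (Fintype.card ι : ℝ) ≤ Fintype.card V * (Fintype.card V * (Fintype.card V * R)) := by
      rw [hR]
      exact_mod_cast h1
    linarith
  have hindex : ∀ (x z p : V) (s : Bool) (τ : List Bool),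
      ν * (Fintype.card V : ℝ) ≤ ((nb G s z ∩ T G ν p τ).card : ℝ) →
      ∃ i : ι, i.1.1 = x ∧ U i.1 = nb G s z ∩ T G ν p τ := by
    intro x z p s τ hτ
    obtain ⟨w, hw⟩ := exists_T_eq hG hl p τ
    have hU : U (x, z, p, s, w) = nb G s z ∩ T G ν p τ := by rw [hw]
    exact ⟨⟨(x, z, p, s, w), by
      rw [hU]
      exact (mul_le_mul_of_nonneg_right hc hn0).trans hτ⟩, rfl, hU⟩
  have : Nonempty ι := by
    obtain ⟨v⟩ := ‹Nonempty V›
    obtain ⟨i, -⟩ := hindex v v v true (List.replicate l true) (by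
      rw [T_eq_univ hG _ (by simpa using hl), inter_univ]
      refine le_trans ?_ (hG.deg _ _)
      nlinarith [hG.small, hG.pos])
    exact ⟨i⟩
  have hν1 : ν ^ 3 / 3 ≤ 1 := hc.trans (by linarith [hG.small])
  have hδ1 : δ ≤ 1 := by
    have : (ν ^ 3 / 3 / 2) ^ (k + 2) ≤ 1 := pow_le_one₀ (by positivity) (by linarith)
    linarith
  obtain ⟨e, y, M, he, hwk, hfresh, hhits⟩ := exists_absorbers (c := ν ^ 3 / 3) (by positivity)
    hν1 hG.card_pos (k := k) (fun i : ι => i.1.1) (fun i : ι => U i.1) (fun i => i.2) N h Q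
    (fun i hi => by rw [hQ i hi, hk])
    (fun i hi a b x y => absorbs hG hl (hQ i hi) a b x y) (Classical.arbitrary V)
    (by
      have h1 : (N : ℝ) * (k + 2) = N * K := by rw [hk]; push_cast; ring
      have h2 : (N : ℝ) * K ≤ γ * Fintype.card V * K :=
        mul_le_mul_of_nonneg_right hN1 (Nat.cast_nonneg _)
      have h3 := mul_le_mul_of_nonneg_right hγK hn0
      rw [h1]
      linarith)
    (exp_decay hδ1 (hι.trans e3.le) (by
      have h1 : δ * (γ * Fintype.card V) ≤ δ * (N + 1) := mul_le_mul_of_nonneg_left hN2 hδ.le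
      have h2 : δ * 2 ≤ δ * (γ * Fintype.card V) := mul_le_mul_of_nonneg_left e2 hδ.le
      rw [← hδd]
      linarith))
  refine ⟨⟨Q, e, y, M, hwk, fun x z p s s' σ hz => ?_⟩, rfl, ?_⟩
  · obtain ⟨i, hi1, hi2⟩ := hindex x z p s (s' :: σ) (mem_rn.1 hz)
    have h1 := hhits i
    rw [hi1, hi2] at h1
    exact h1
  · rw [Multiset.singleton_add, Multiset.nodup_cons]
    refine ⟨fun h0 => hfresh.2 _ h0 ?_, hfresh.1⟩
    simp [he]

lemma Wk.exists_fun {V : Type*} {G : V → V → Prop} {Q : List Bool} {a b : V} {M : Multiset V}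
    (h : Wk G Q a b M) : ∃ f : ℕ → V, f 0 = a ∧ f Q.length = b ∧
      (∀ (i : ℕ) (hi : i < Q.length), E G Q[i] (f i) (f (i + 1))) ∧
      ∀ v ∈ M, ∃ i < Q.length, f (i + 1) = v := by
  induction h with
  | nil a => exact ⟨fun _ => a, rfl, rfl, by simp, by simp⟩
  | @cons s Q a v b M e _ ih =>
    obtain ⟨f, hf0, hfl, hfE, hfM⟩ := ih
    refine ⟨fun i => Nat.casesOn i a f, rfl, hfl, ?_, ?_⟩
    · rintro (_ | i) hi
      · simpa [hf0] using e
      · simpa using hfE i (by simpa using hi)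
    · intro w hw
      rcases Multiset.mem_cons.1 hw with rfl | hw
      · exact ⟨0, by simp, hf0⟩
      · obtain ⟨i, hi, hiw⟩ := hfM w hw
        exact ⟨i + 1, by simpa using hi, hiw⟩

lemma Wk.exists_cycle {V : Type*} [Fintype V] {G : V → V → Prop} {a : V}
    {ε : ZMod (Fintype.card V) → Bool}
    (h : Wk G (List.ofFn fun i : Fin (Fintype.card V) => ε ((i : ℕ) : ZMod (Fintype.card V)))
      a a (univ : Finset V).val) :
    ∃ f : ZMod (Fintype.card V) → V, Function.Bijective f ∧
      ∀ i, (ε i = true → G (f i) (f (i + 1))) ∧ (ε i = false → G (f (i + 1)) (f i)) := by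
  have : NeZero (Fintype.card V) := ⟨(Fintype.card_pos_iff.2 ⟨a⟩).ne'⟩
  obtain ⟨f, hf0, hfl, hfE, hfM⟩ := h.exists_fun
  simp only [List.length_ofFn, List.getElem_ofFn] at hfl hfE hfM
  have hF : ∀ k ≤ Fintype.card V, f ((k : ZMod (Fintype.card V)).val) = f k := by
    intro k hk
    rcases hk.lt_or_eq with hk | rfl
    · rw [ZMod.val_natCast_of_lt hk]
    · rw [ZMod.natCast_self, ZMod.val_zero, hf0, hfl]
  refine ⟨fun i => f i.val, ?_, fun i => ?_⟩
  · rw [Fintype.bijective_iff_surjective_and_card, ZMod.card]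
    refine ⟨fun v => ?_, rfl⟩
    obtain ⟨i, hi, hiv⟩ := hfM v (Finset.mem_univ_val v)
    exact ⟨((i + 1 : ℕ) : ZMod (Fintype.card V)), by rw [← hiv]; exact hF _ hi⟩
  · have hi := ZMod.val_lt i
    have h1 := hfE i.val hi
    rw [← hF (i.val + 1) hi] at h1
    push_cast at h1
    rw [ZMod.natCast_zmod_val] at h1
    constructor <;> intro h2 <;> rw [h2] at h1
    · exact E_true.1 h1
    · exact E_false.1 h1

lemma flatMap_slices {α : Type*} (D : List α) (k m : ℕ) :
    (List.range m).flatMap (fun j => (D.drop (j * k)).take k) ++ D.drop (m * k) = D := by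
  induction m with
  | zero => simp
  | succ m ih =>
    conv_rhs => rw [← ih]
    rw [List.range_succ, List.flatMap_append, List.append_assoc]
    congr 1
    rw [List.flatMap_singleton, add_mul, one_mul, ← List.drop_drop, List.take_append_drop]

lemma expander_induce {V : Type*} [Fintype V] {G : V → V → Prop} (hG : IsOriented G) {α : ℝ}
    (hα : 0 < α) (hα1 : α ≤ 1 / 8)
    (hdeg : ∀ s x, (3 / 8 + α) * (Fintype.card V : ℝ) ≤ ((nb G s x).card : ℝ)) (A : Finset V)
    (hA : (A.card : ℝ) ≤ α / 2 * Fintype.card V) (hV : 0 < Fintype.card V) :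
    Expander (fun x y : {v // v ∉ A} => G x y) (α / 200) := by
  have hn : (0 : ℝ) < Fintype.card V := by exact_mod_cast hV
  have hcard : (Fintype.card {v // v ∉ A} : ℝ) = Fintype.card V - A.card := by
    rw [Fintype.card_subtype_compl]
    simp only [Fintype.card_coe]
    rw [Nat.cast_sub (card_le_univ A)]
  have h := expander_of_degree (G := fun x y : {v // v ∉ A} => G x y) (α := α / 2)
    (fun x y hxy => hG x y hxy) (fun s x => ?_) (by linarith) (by linarith) ?_
  · convert h using 1
    ring
  · have h1 : (nb G s x).card ≤
        (nb (fun x y : {v // v ∉ A} => G x y) s x).card + A.card := by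
      rw [← card_map (Function.Embedding.subtype _)]
      refine (card_le_card fun y hy => ?_).trans (card_union_le _ _)
      by_cases hyA : y ∈ A
      · exact mem_union_right _ hyA
      · refine mem_union_left _ (Finset.mem_map.2 ⟨⟨y, hyA⟩, ?_, rfl⟩)
        rw [mem_nb] at hy ⊢
        exact hy
    have h2 : ((nb G s x).card : ℝ) ≤
        (nb (fun x y : {v // v ∉ A} => G x y) s x).card + A.card := by exact_mod_cast h1
    have h3 := hdeg s x
    have h4 : (0 : ℝ) ≤ A.card := Nat.cast_nonneg _
    rw [hcard]
    nlinarith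
  · have : (0 : ℝ) < Fintype.card {v // v ∉ A} := by
      rw [hcard]; nlinarith
    exact_mod_cast this

lemma Absorbers.card_vertices {V : Type*} [Fintype V] {G : V → V → Prop} {ν : ℝ} {N h K : ℕ}
    (A : Absorbers G ν N h) (hK : ∀ i < N, (A.Q i).length = K) :
    Multiset.card ({A.e 0} + ∑ i ∈ range N, (A.y i ::ₘ A.M i)) = 1 + N * K := by
  rw [Multiset.card_add, Multiset.card_sum, Multiset.card_singleton, Finset.sum_congr rfl fun i hi => ?_,
    Finset.sum_const, card_range, smul_eq_mul]
  rw [(A.wk i (mem_range.1 hi)).card, hK i (mem_range.1 hi)]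

/-- A closed walk through all the vertices, given absorbers and an almost perfect cover of the
remaining vertices. -/
lemma Absorbers.hamilton {V : Type*} [Fintype V] {G : V → V → Prop} {ν : ℝ} {N h K l B m r : ℕ}
    (hG : Expander G ν) (hl : 1 ≤ l * ν) (hr : l ≤ r) (A : Absorbers G ν N h) (D : List Bool)
    (hQ : ∀ i, A.Q i = (D.drop (i * K)).take K)
    (hD : D.length = N * K + (m * (l + B) + r)) (hn : D.length = Fintype.card V)
    (hnd : ({A.e 0} + ∑ i ∈ range N, (A.y i ::ₘ A.M i)).Nodup)
    (hh : r - 1 + m * (l - 1) ≤ h) {S : Finset V}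
    (hS : ∀ v ∈ S, v ∉ ({A.e 0} + ∑ i ∈ range N, (A.y i ::ₘ A.M i)))
    (p q : Fin m → V) (M : Fin m → Multiset V)
    (hW : ∀ j : Fin m, Wk G ((((D.drop (N * K)).drop ((j : ℕ) * (l + B))).take (l + B)).drop l)
      (p j) (q j) (M j))
    (hM : ∑ j, (p j ::ₘ M j) ≤ S.val) : Wk G D (A.e 0) (A.e 0) (univ : Finset V).val := by
  set W := {A.e 0} + ∑ i ∈ range N, (A.y i ::ₘ A.M i) with hWd
  set F := D.drop (N * K) with hF
  have hFl : F.length = m * (l + B) + r := by rw [hF, List.length_drop]; omega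
  have hchunk : ∀ j : Fin m, ((F.drop (j * (l + B))).take (l + B)).length = l + B := by
    intro j
    rw [List.length_take, List.length_drop, hFl]
    have : (j + 1) * (l + B) ≤ m * (l + B) := Nat.mul_le_mul_right _ j.2
    rw [add_mul, one_mul] at this
    omega
  let L : List (Block G) := (List.finRange m).map fun j : Fin m =>
    ⟨((F.drop ((j : ℕ) * (l + B))).take (l + B)).take l, _, p j, q j, M j, hW j⟩
  have hl1 : 1 ≤ l := by
    rcases Nat.eq_zero_or_pos l with rfl | h0
    · norm_num at hl
    · exact h0
  have hLC : ∀ b ∈ L, b.C.length = l := by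
    intro b hb
    obtain ⟨j, -, rfl⟩ := List.mem_map.1 hb
    show (((F.drop (j * (l + B))).take (l + B)).take l).length = l
    rw [List.length_take, hchunk]
    omega
  have hLsum : (L.map fun b => b.p ::ₘ b.M).sum = ∑ j, (p j ::ₘ M j) := by
    rw [← List.sum_ofFn, List.ofFn_eq_map]
    simp only [L, List.map_map]
    rfl
  have hLcard : ∀ j, Multiset.card (p j ::ₘ M j) = B + 1 := by
    intro j
    rw [Multiset.card_cons, (hW j).card, List.length_drop, hchunk]
    omega
  have hWS : W + ∑ j, (p j ::ₘ M j) ≤ (univ : Finset V).val := by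
    have hnodup : (W + ∑ j, (p j ::ₘ M j)).Nodup :=
      Multiset.nodup_add.2 ⟨hnd, Multiset.nodup_of_le hM S.nodup,
        Multiset.disjoint_left.2 fun {v} hv hv2 =>
          hS v (Finset.mem_def.2 (Multiset.mem_of_le hM hv2)) hv⟩
    exact (Multiset.le_iff_subset hnodup).2 fun v _ => Finset.mem_univ_val v
  obtain ⟨X, hX⟩ := Multiset.le_iff_exists_add.1 hWS
  have hQlen : ∀ i < N, (A.Q i).length = K := by
    intro i hi
    rw [hQ, List.length_take, List.length_drop, hD]
    have : (i + 1) * K ≤ N * K := Nat.mul_le_mul_right _ hi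
    rw [add_mul, one_mul] at this
    omega
  have hXc : Multiset.card X = m * (l - 1) + (r - 1) := by
    have h1 := congrArg Multiset.card hX
    rw [Multiset.card_add, Multiset.card_add, A.card_vertices hQlen, Multiset.card_sum, Finset.sum_congr rfl fun j _ => hLcard j,
      Finset.sum_const, card_univ, Fintype.card_fin, smul_eq_mul] at h1
    change Fintype.card V = _ at h1
    rw [← hn, hD] at h1
    obtain ⟨l, rfl⟩ := Nat.exists_eq_add_of_le' hl1
    have h2 : m * (l + 1 + B) = m * l + m * (B + 1) := by ring
    rw [h2] at h1
    simp only [Nat.add_sub_cancel]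
    omega
  have hCf : (F.drop (m * (l + B))).length = r := by rw [List.length_drop, hFl]; omega
  have key := A.closed_walk hG (Cf := F.drop (m * (l + B)))
    (by rw [hCf]; exact hl.trans (mul_le_mul_of_nonneg_right (by exact_mod_cast hr) hG.pos.le))
    L (fun b hb => by rw [hLC b hb]; exact hl) X
    (by
      rw [hCf, hXc, List.map_congr_left (g := fun _ => l - 1) fun b hb => by rw [hLC b hb]]
      simp [L, Function.comp_def]) (by rw [hXc]; omega)
  refine key.congr ?_ ?_
  · have h1 : L.flatMap (fun b => b.C ++ b.β) =
        (List.range m).flatMap (fun j => (F.drop (j * (l + B))).take (l + B)) := by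
      simp only [L, List.flatMap_map, List.take_append_drop]
      rw [← List.map_coe_finRange_eq_range, List.flatMap_map]
    rw [h1, flatMap_slices, List.flatMap_congr fun i _ => hQ i, hF, flatMap_slices]
  · rw [hLsum, hX, hWd]
    abel

lemma exists_split {n a l B : ℕ} (h : a + l ≤ n) (hl : 0 < l) :
    ∃ m r, n = a + (m * (l + B) + r) ∧ l ≤ r ∧ r ≤ 2 * l + B := by
  refine ⟨(n - a - l) / (l + B), l + (n - a - l) % (l + B), ?_, Nat.le_add_right _ _, ?_⟩
  · have := Nat.div_add_mod' (n - a - l) (l + B)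
    omega
  · have := Nat.mod_lt (n - a - l) (show 0 < l + B by omega)
    omega

lemma card_nb_true {V : Type*} [Fintype V] (G : V → V → Prop) (x : V) :
    (nb G true x).card = outDeg G x := by
  rw [outDeg, Nat.card_eq_fintype_card, Fintype.card_subtype, nb]
  congr 1

lemma card_nb_false {V : Type*} [Fintype V] (G : V → V → Prop) (x : V) :
    (nb G false x).card = inDeg G x := by
  rw [inDeg, Nat.card_eq_fintype_card, Fintype.card_subtype, nb]
  congr 1

lemma card_compl_subtype {V : Type*} [Fintype V] (A : Finset V) :
    Fintype.card {v // v ∉ A} = Fintype.card V - A.card := by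
  rw [Fintype.card_subtype_compl]
  simp only [Fintype.card_coe]

/-- Almost perfect covers of an induced subgraph, transferred to the whole graph. -/
lemma near_cover_of_induce {V : Type*} [Fintype V] {G : V → V → Prop} (A : Finset V) {m : ℕ}
    {β : Fin m → List Bool} {p q : Fin m → {v // v ∉ A}} {M : Fin m → Multiset {v // v ∉ A}}
    (hW : ∀ j, Wk (fun x y : {v // v ∉ A} => G x y) (β j) (p j) (q j) (M j))
    (hM : ∑ j, (p j ::ₘ M j) ≤ (univ : Finset {v // v ∉ A}).val) :
    (∀ j, Wk G (β j) (p j) (q j) ((M j).map Subtype.val)) ∧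
      ∑ j, ((p j : V) ::ₘ (M j).map Subtype.val) ≤ (univ.filter fun v => v ∉ A).val := by
  refine ⟨fun j => (hW j).map Subtype.val fun _ _ h => h, ?_⟩
  have h1 : ∑ j, ((p j : V) ::ₘ (M j).map Subtype.val) =
      (∑ j, (p j ::ₘ M j)).map Subtype.val := by
    rw [← Multiset.coe_mapAddMonoidHom, map_sum]
    exact Finset.sum_congr rfl fun j _ => (Multiset.map_cons _ _ _).symm
  rw [h1]
  refine (Multiset.map_le_map hM).trans ?_
  rw [Multiset.le_iff_subset (univ.nodup.map Subtype.val_injective)]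
  intro v hv
  obtain ⟨w, -, rfl⟩ := Multiset.mem_map.1 hv
  exact Finset.mem_def.1 (mem_filter.2 ⟨mem_univ _, w.2⟩)

/-- All orientations of a Hamilton cycle, under a bound on the degrees in both directions. -/
lemma exists_hamilton_of_nb {α : ℝ} (hα : 0 < α) (hα1 : α ≤ 1 / 8) :
    ∃ n₀ : ℕ, ∀ (V : Type) [Fintype V] (G : V → V → Prop), IsOriented G →
      n₀ ≤ Fintype.card V →
      (∀ s x, (3 / 8 + α) * (Fintype.card V : ℝ) ≤ ((nb G s x).card : ℝ)) →
      ∀ D : List Bool, D.length = Fintype.card V → ∃ a, Wk G D a a (univ : Finset V).val := by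
  obtain ⟨ν, hν⟩ : ∃ ν, ν = α / 200 := ⟨_, rfl⟩
  have hν0 : 0 < ν := by rw [hν]; positivity
  have hν1 : ν ≤ 1 / 1600 := by rw [hν]; linarith
  obtain ⟨l, hl⟩ : ∃ l : ℕ, 1 ≤ l * ν := by
    obtain ⟨l, hl⟩ := exists_nat_ge (1 / ν)
    exact ⟨l, by rwa [div_le_iff₀ hν0] at hl⟩
  have hl2 : (2 : ℝ) ≤ l := by nlinarith
  have hl2' : 2 ≤ l := by exact_mod_cast hl2
  obtain ⟨K, hK⟩ : ∃ K : ℕ, K = 3 * (2 * l + 2 * (4 * l + 6)) := ⟨_, rfl⟩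
  have hK0 : (0 : ℝ) < K := by rw [hK]; exact_mod_cast (by omega)
  obtain ⟨γ, hγ⟩ : ∃ γ : ℝ, γ = ν ^ 3 / 12 / K := ⟨_, rfl⟩
  have hγ0 : 0 < γ := by rw [hγ]; positivity
  have hγK : γ * K = ν ^ 3 / 12 := by rw [hγ]; exact div_mul_cancel₀ _ hK0.ne'
  have hν3 : ν ^ 3 / 12 ≤ ν := by nlinarith [mul_pos hν0 hν0]
  obtain ⟨c, hc, n₁, h₁⟩ := exists_absorbing hν0 hl hγ0 (by rw [← hK, hγK])
  obtain ⟨B, hB⟩ := exists_nat_ge (2 * l / c)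
  rw [div_le_iff₀ hc] at hB
  have hBl : (0 : ℝ) < B + l := by positivity
  obtain ⟨n₂, h₂⟩ := exists_near_cover B (η := 1 / (B + l)) (by positivity)
    (by rw [div_le_one hBl]; linarith [(Nat.cast_nonneg B : (0 : ℝ) ≤ B)]) hν0
  obtain ⟨n₃, h₃⟩ := exists_nat_ge ((2 * l + B) / (c / 2))
  rw [div_le_iff₀ (by positivity)] at h₃
  obtain ⟨n₄, h₄⟩ := exists_nat_ge (1 / ν)
  rw [div_le_iff₀ hν0] at h₄
  refine ⟨n₁ + 2 * n₂ + n₃ + n₄ + 2 * l, fun V _ G hG hn hdeg D hD => ?_⟩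
  obtain ⟨n, hnV⟩ : ∃ n, n = Fintype.card V := ⟨_, rfl⟩
  rw [← hnV] at hn hD
  have hnn : (n₁ : ℝ) + 2 * n₂ + n₃ + n₄ + 2 * l ≤ n := by exact_mod_cast hn
  have e1 : (0 : ℝ) ≤ n₁ := Nat.cast_nonneg _
  have e2 : (0 : ℝ) ≤ n₂ := Nat.cast_nonneg _
  have e3 : (0 : ℝ) ≤ n₃ := Nat.cast_nonneg _
  have e4 : (0 : ℝ) ≤ n₄ := Nat.cast_nonneg _
  have hn0 : (0 : ℝ) < n := by linarith
  have hV : 0 < Fintype.card V := by omega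
  have hexp : Expander G ν := by
    have h := expander_of_degree (α := α / 2) hG (fun s x => (le_trans ?_ (hdeg s x)))
      (by positivity) (by linarith) hV
    · convert h using 1
      rw [hν]; ring
    · exact mul_le_mul_of_nonneg_right (by linarith) (Nat.cast_nonneg _)
  obtain ⟨N, hN⟩ : ∃ N, N = ⌊γ * n⌋₊ := ⟨_, rfl⟩
  have hN1 : (N : ℝ) ≤ γ * n := by rw [hN]; exact Nat.floor_le (by positivity)
  have hN2 : γ * n ≤ N + 1 := by rw [hN]; exact (Nat.lt_floor_add_one _).le
  have hNK : (N : ℝ) * K ≤ ν * n := by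
    calc (N : ℝ) * K ≤ γ * n * K := mul_le_mul_of_nonneg_right hN1 hK0.le
      _ = (γ * K) * n := by ring
      _ ≤ ν * n := by rw [hγK]; exact mul_le_mul_of_nonneg_right hν3 hn0.le
  have hνn : ν * n ≤ 1 / 1600 * n := mul_le_mul_of_nonneg_right hν1 hn0.le
  have h1n : 1 ≤ ν * n := h₄.trans (by
    rw [mul_comm]; exact mul_le_mul_of_nonneg_left (by linarith) hν0.le)
  have hsplit : N * K + l ≤ n := by
    have : (N : ℝ) * K + l ≤ n := by linarith
    exact_mod_cast this
  obtain ⟨m, r, hmr, hlr, hr⟩ := exists_split (B := B) hsplit (by omega)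
  have hm : (m : ℝ) * (l + B) ≤ n := by
    have : m * (l + B) ≤ n := by omega
    exact_mod_cast this
  have hh : r - 1 + m * (l - 1) ≤ ⌊c * n⌋₊ := by
    apply Nat.le_floor
    have i1 : r - 1 + m * (l - 1) ≤ r + m * l :=
      Nat.add_le_add (Nat.sub_le _ _) (Nat.mul_le_mul_left _ (Nat.sub_le _ _))
    have i2 : ((r - 1 + m * (l - 1) : ℕ) : ℝ) ≤ r + m * l := by exact_mod_cast i1
    have i3 : (r : ℝ) ≤ 2 * l + B := by exact_mod_cast hr
    have i4 : (m : ℝ) * (2 * l) ≤ m * (B * c) := mul_le_mul_of_nonneg_left hB (Nat.cast_nonneg _)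
    have i5 : c * ((m : ℝ) * (l + B)) ≤ c * n := mul_le_mul_of_nonneg_left hm hc.le
    have i6 : 0 ≤ c * (m : ℝ) * l := by positivity
    have i7 : (n₃ : ℝ) * (c / 2) ≤ n * (c / 2) :=
      mul_le_mul_of_nonneg_right (by linarith) (by positivity)
    nlinarith
  have hQlen : ∀ i < N, ((D.drop (i * K)).take K).length = K := by
    intro i hi
    rw [List.length_take, List.length_drop, hD]
    have : (i + 1) * K ≤ N * K := Nat.mul_le_mul_right _ hi
    rw [add_mul, one_mul] at this
    omega
  obtain ⟨A, hAQ, hnd⟩ := h₁ V G hexp (by omega) N ⌊c * n⌋₊ (by rw [← hnV]; exact hN1)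
    (by rw [← hnV]; exact hN2) (by rw [← hnV]; exact Nat.floor_le (by positivity))
    (fun i => (D.drop (i * K)).take K) (by rw [← hK]; exact hQlen)
  have hAQ' : ∀ i, A.Q i = (D.drop (i * K)).take K := fun i => by rw [hAQ]
  obtain ⟨W, hW⟩ : ∃ W : Finset V,
      W = ({A.e 0} + ∑ i ∈ range N, (A.y i ::ₘ A.M i)).toFinset := ⟨_, rfl⟩
  have hWc : W.card = 1 + N * K := by
    rw [hW, Multiset.toFinset_card_of_nodup hnd,
      A.card_vertices fun i hi => by rw [hAQ' i, hQlen i hi]]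
  have hWc' : (W.card : ℝ) ≤ α / 2 * Fintype.card V := by
    rw [hWc, ← hnV, show α / 2 = 100 * ν by rw [hν]; ring]
    push_cast
    linarith
  have hexp' := expander_induce hG hα hα1 hdeg W hWc' hV
  rw [← hν] at hexp'
  have hn' : Fintype.card {v // v ∉ W} = r - 1 + m * (l + B) := by
    rw [card_compl_subtype, hWc]
    omega
  have hn'' : n₂ ≤ Fintype.card {v // v ∉ W} := by
    rw [card_compl_subtype, hWc, ← hnV]
    have : (n₂ : ℝ) + (1 + N * K) ≤ n := by linarith
    have : n₂ + (1 + N * K) ≤ n := by exact_mod_cast this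
    omega
  have hchunk : ∀ j : Fin m, ((((D.drop (N * K)).drop ((j : ℕ) * (l + B))).take
      (l + B)).drop l).length = B := by
    intro j
    rw [List.length_drop, List.length_take, List.length_drop, List.length_drop, hD]
    have : ((j : ℕ) + 1) * (l + B) ≤ m * (l + B) := Nat.mul_le_mul_right _ j.2
    rw [add_mul, one_mul] at this
    omega
  obtain ⟨p, q, M, hWk, hM⟩ := h₂ {v // v ∉ W} _ hexp' hn'' m _ hchunk (by
    have j1 : (m : ℝ) * (l + B) ≤ Fintype.card {v // v ∉ W} := by
      rw [hn']; exact_mod_cast Nat.le_add_left _ _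
    have j2 : 1 - 1 / ((B : ℝ) + l) = (B + l - 1) / (B + l) := by field_simp
    rw [j2, div_mul_eq_mul_div, le_div_iff₀ hBl]
    calc (m : ℝ) * (B + 1) * (B + l) = (B + 1) * (m * (l + B)) := by ring
      _ ≤ (B + l - 1) * (m * (l + B)) :=
        mul_le_mul_of_nonneg_right (by linarith) (by positivity)
      _ ≤ _ := mul_le_mul_of_nonneg_left j1 (by linarith [(Nat.cast_nonneg B : (0 : ℝ) ≤ B)]))
  obtain ⟨hWk', hM'⟩ := near_cover_of_induce W hWk hM
  refine ⟨A.e 0, A.hamilton (K := K) hexp hl hlr D hAQ' (by rw [hD]; exact hmr)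
    (by rw [hD]; exact hnV) hnd hh (S := univ.filter fun v => v ∉ W) ?_ _ _ _ hWk' hM'⟩
  intro v hv hv2
  exact (mem_filter.1 hv).2 (by rw [hW]; exact Multiset.mem_toFinset.2 hv2)

end OrientedHam

/-- For every α > 0 there exists n₀ such that every oriented graph on n ≥ n₀ vertices with
minimum semidegree at least (3/8 + α)n contains every orientation of a Hamilton cycle:
for every direction pattern ε : ZMod n → Bool there is a cyclic ordering f of all vertices
such that for each i the edge f(i) → f(i+1) is present when ε i = true, and the edge
f(i+1) → f(i) is present when ε i = false. -/
theorem oriented_all_orientations_hamilton (α : ℝ) (hα : 0 < α) :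
    ∃ n₀ : ℕ, ∀ (V : Type) [Fintype V] (G : V → V → Prop),
      IsOriented G →
      n₀ ≤ Fintype.card V →
      (∀ x : V,
        (3 / 8 + α) * (Fintype.card V : ℝ) ≤ (outDeg G x : ℝ) ∧
        (3 / 8 + α) * (Fintype.card V : ℝ) ≤ (inDeg G x : ℝ)) →
      ∀ ε : ZMod (Fintype.card V) → Bool,
        ∃ f : ZMod (Fintype.card V) → V, Function.Bijective f ∧
          ∀ i, (ε i = true → G (f i) (f (i + 1))) ∧ (ε i = false → G (f (i + 1)) (f i)) := by
  obtain ⟨n₀, h₀⟩ := OrientedHam.exists_hamilton_of_nb (α := min α (1 / 8))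
    (lt_min hα (by norm_num)) (min_le_right _ _)
  refine ⟨n₀, fun V _ G hG hn hdeg ε => ?_⟩
  have hle : (3 / 8 + min α (1 / 8)) * (Fintype.card V : ℝ) ≤
      (3 / 8 + α) * (Fintype.card V : ℝ) :=
    mul_le_mul_of_nonneg_right (add_le_add le_rfl (min_le_left _ _)) (Nat.cast_nonneg _)
  obtain ⟨a, ha⟩ := h₀ V G hG hn
    (fun s x => by
      cases s
      · rw [OrientedHam.card_nb_false]; exact hle.trans (hdeg x).2
      · rw [OrientedHam.card_nb_true]; exact hle.trans (hdeg x).1)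
    (List.ofFn fun i : Fin (Fintype.card V) => ε ((i : ℕ) : ZMod (Fintype.card V)))
    (List.length_ofFn)
  exact ha.exists_cycle
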